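/- arXiv:2001.11061 — 4 statements merged into one kernel-verified Lean document; each statement's English description precedes it below -/
import Mathlib

section
/- Let n ≥ 1 and let K : ℝⁿ × ℝⁿ → ℂ be measurable with K = ∑_{j=1}^{N} K_j, where each K_j is measurable and satisfies either M_j := (ess sup_{ξ∈ℝⁿ} ∫_{ℝⁿ} |K_j(ξ,η)|² dη)^{1/2} < ∞ or M_j := (ess sup_{η∈ℝⁿ} ∫_{ℝⁿ} |K_j(ξ,η)|² dξ)^{1/2} < ∞. Then for all f, g ∈ L²(ℝⁿ) the function h(ξ) = ∫_{ℝⁿ} K(ξ,η) f(ξ−η) g(η) dη is defined for almost every ξ (the integral converges absolutely for a.e. ξ), belongs to L²(ℝⁿ), and ‖h‖_{L²} ≤ (∑_{j=1}^{N} M_j) · ‖f‖_{L²} · ‖g‖_{L²}. -/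
open MeasureTheory ENNReal

theorem cs_aux {α : Type*} [MeasurableSpace α] (μ : Measure α) {u v : α → ℝ≥0∞}
    (hu : AEMeasurable u μ) (hv : AEMeasurable v μ) :
    (∫⁻ x, u x * v x ∂μ) ^ 2 ≤ (∫⁻ x, u x ^ 2 ∂μ) * ∫⁻ x, v x ^ 2 ∂μ := by
  have h := ENNReal.lintegral_mul_le_Lp_mul_Lq μ Real.HolderConjugate.two_two hu hv
  simp only [Pi.mul_apply, ENNReal.rpow_two] at h
  calc _ ≤ _ := pow_le_pow_left' h 2
    _ = _ := by
      rw [mul_pow, ← ENNReal.rpow_two, ← ENNReal.rpow_two, ← ENNReal.rpow_mul,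
        ← ENNReal.rpow_mul]
      norm_num

theorem eLpNorm_two_sq {α ε : Type*} [MeasurableSpace α] [ENorm ε] (μ : Measure α) (u : α → ε) :
    (eLpNorm u 2 μ) ^ 2 = ∫⁻ x, ‖u x‖ₑ ^ 2 ∂μ := by
  rw [eLpNorm_eq_lintegral_rpow_enorm_toReal (by norm_num) (by norm_num), ← ENNReal.rpow_two,
    ← ENNReal.rpow_mul]
  norm_num

section
variable {n : ℕ}

theorem ae_sub {f : (Fin n → ℝ) → ℂ} (hf : AEStronglyMeasurable f volume) :
    AEStronglyMeasurable (fun p : (Fin n → ℝ) × (Fin n → ℝ) => f (p.1 - p.2))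
      ((volume : Measure (Fin n → ℝ)).prod volume) :=
  hf.comp_quasiMeasurePreserving (quasiMeasurePreserving_sub volume volume)

theorem ae_sub_left {f : (Fin n → ℝ) → ℂ} (hf : AEStronglyMeasurable f volume) (ξ : Fin n → ℝ) :
    AEStronglyMeasurable (fun η => f (ξ - η)) volume :=
  hf.comp_quasiMeasurePreserving (quasiMeasurePreserving_sub_left volume ξ)

theorem case_one (K : ((Fin n → ℝ) × (Fin n → ℝ)) → ℂ) (hK : Measurable K) (S : ℝ≥0∞)
    (hS : S = essSup (fun ξ : Fin n → ℝ =>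
          ∫⁻ η, ((‖K (ξ, η)‖₊ : ℝ≥0∞)) ^ 2 ∂volume) volume)
    (f g : (Fin n → ℝ) → ℂ) (hf : AEStronglyMeasurable f volume)
    (hg : AEStronglyMeasurable g volume) :
    ∫⁻ ξ, (∫⁻ η, ‖K (ξ, η)‖ₑ * ‖f (ξ - η)‖ₑ * ‖g η‖ₑ) ^ 2
      ≤ S * (∫⁻ ξ, ‖f ξ‖ₑ ^ 2) * ∫⁻ ξ, ‖g ξ‖ₑ ^ 2 := by
  have hm : AEMeasurable (fun p : (Fin n → ℝ) × (Fin n → ℝ) => ‖f (p.1 - p.2)‖ₑ ^ 2 * ‖g p.2‖ₑ ^ 2)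
      ((volume : Measure (Fin n → ℝ)).prod volume) :=
    ((ae_sub hf).enorm.pow_const 2).mul (hg.comp_snd.enorm.pow_const 2)
  have hm2 : ∀ (η : Fin n → ℝ), AEMeasurable (fun ξ => ‖f (ξ - η)‖ₑ ^ 2) volume := fun η =>
    (hf.comp_quasiMeasurePreserving (measurePreserving_sub_right volume η).quasiMeasurePreserving).enorm.pow_const 2
  calc _ ≤ ∫⁻ ξ, S * ∫⁻ η, ‖f (ξ - η)‖ₑ ^ 2 * ‖g η‖ₑ ^ 2 := by
        apply lintegral_mono_ae
        have h1 := ENNReal.ae_le_essSup (μ := volume) (fun ξ : Fin n → ℝ =>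
          ∫⁻ η, ((‖K (ξ, η)‖₊ : ℝ≥0∞)) ^ 2 ∂volume)
        rw [← hS] at h1
        filter_upwards [h1] with ξ hξ
        have h2 := cs_aux volume (u := fun η => ‖K (ξ, η)‖ₑ)
          (v := fun η => ‖f (ξ - η)‖ₑ * ‖g η‖ₑ)
          (hK.comp measurable_prodMk_left).enorm.aemeasurable
          ((ae_sub_left hf ξ).enorm.mul hg.enorm)
        simp only [← mul_assoc, mul_pow] at h2
        refine h2.trans ?_
        gcongr
        exact hξ
    _ = S * ∫⁻ ξ, ∫⁻ η, ‖f (ξ - η)‖ₑ ^ 2 * ‖g η‖ₑ ^ 2 :=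
        lintegral_const_mul'' _ hm.lintegral_prod_right'
    _ = S * ∫⁻ η, ∫⁻ ξ, ‖f (ξ - η)‖ₑ ^ 2 * ‖g η‖ₑ ^ 2 := by
        rw [lintegral_lintegral_swap hm]
    _ = S * ∫⁻ η, (∫⁻ ξ, ‖f ξ‖ₑ ^ 2) * ‖g η‖ₑ ^ 2 := by
        congr 1
        refine lintegral_congr fun η => ?_
        rw [lintegral_mul_const'' _ (hm2 η), lintegral_sub_right_eq_self (fun ξ => ‖f ξ‖ₑ ^ 2) η]
    _ = _ := by
        rw [lintegral_const_mul'' _ (hg.enorm.pow_const 2), mul_assoc]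

theorem case_two (K : ((Fin n → ℝ) × (Fin n → ℝ)) → ℂ) (hK : Measurable K) (S : ℝ≥0∞)
    (hS : S = essSup (fun η : Fin n → ℝ =>
          ∫⁻ ξ, ((‖K (ξ, η)‖₊ : ℝ≥0∞)) ^ 2 ∂volume) volume)
    (f g : (Fin n → ℝ) → ℂ) (hf : AEStronglyMeasurable f volume)
    (hg : AEStronglyMeasurable g volume) :
    ∫⁻ ξ, (∫⁻ η, ‖K (ξ, η)‖ₑ * ‖f (ξ - η)‖ₑ * ‖g η‖ₑ) ^ 2
      ≤ S * (∫⁻ ξ, ‖f ξ‖ₑ ^ 2) * ∫⁻ ξ, ‖g ξ‖ₑ ^ 2 := by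
  have hm : AEMeasurable (fun p : (Fin n → ℝ) × (Fin n → ℝ) => ‖K (p.1, p.2)‖ₑ ^ 2 * ‖g p.2‖ₑ ^ 2)
      ((volume : Measure (Fin n → ℝ)).prod volume) :=
    (hK.enorm.aemeasurable.pow_const 2).mul (hg.comp_snd.enorm.pow_const 2)
  calc _ ≤ ∫⁻ ξ, (∫⁻ ξ, ‖f ξ‖ₑ ^ 2) * ∫⁻ η, ‖K (ξ, η)‖ₑ ^ 2 * ‖g η‖ₑ ^ 2 := by
        apply lintegral_mono
        intro ξ
        have h2 := cs_aux volume (u := fun η => ‖f (ξ - η)‖ₑ)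
          (v := fun η => ‖K (ξ, η)‖ₑ * ‖g η‖ₑ)
          (ae_sub_left hf ξ).enorm
          ((hK.comp measurable_prodMk_left).enorm.aemeasurable.mul hg.enorm)
        rw [lintegral_sub_left_eq_self (fun ξ => ‖f ξ‖ₑ ^ 2) ξ] at h2
        simp only [mul_pow] at h2
        refine le_trans (le_of_eq ?_) h2
        beta_reduce
        congr 1
        refine lintegral_congr fun η => ?_
        ring
    _ = (∫⁻ ξ, ‖f ξ‖ₑ ^ 2) * ∫⁻ ξ, ∫⁻ η, ‖K (ξ, η)‖ₑ ^ 2 * ‖g η‖ₑ ^ 2 :=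
        lintegral_const_mul'' _ hm.lintegral_prod_right'
    _ = (∫⁻ ξ, ‖f ξ‖ₑ ^ 2) * ∫⁻ η, ∫⁻ ξ, ‖K (ξ, η)‖ₑ ^ 2 * ‖g η‖ₑ ^ 2 := by
        rw [lintegral_lintegral_swap hm]
    _ ≤ (∫⁻ ξ, ‖f ξ‖ₑ ^ 2) * ∫⁻ η, S * ‖g η‖ₑ ^ 2 := by
        refine mul_le_mul_right (lintegral_mono_ae ?_) _
        have h1 := ENNReal.ae_le_essSup (μ := volume) (fun η : Fin n → ℝ =>
          ∫⁻ ξ, ((‖K (ξ, η)‖₊ : ℝ≥0∞)) ^ 2 ∂volume)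
        rw [← hS] at h1
        filter_upwards [h1] with η hη
        have hk : Measurable (fun ξ => ‖K (ξ, η)‖ₑ ^ 2) :=
          (hK.comp measurable_prodMk_right).enorm.pow_const 2
        rw [lintegral_mul_const _ hk]
        gcongr
        exact hη
    _ = _ := by
        rw [lintegral_const_mul'' _ (hg.enorm.pow_const 2)]
        ring
end



/-- **Rauch–Reed bilinear kernel lemma.**  Let `K = ∑ j, K j` with each `K j`
measurable on `ℝⁿ × ℝⁿ`, and suppose each `K j` has a finite "Schur constant"
`M j`, equal to the square root of either the essential supremum over `ξ` of
`∫ |K j (ξ,η)|² dη`, or the essential supremum over `η` of `∫ |K j (ξ,η)|² dξ`.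
Then for `f, g ∈ L²(ℝⁿ)`, the integral `h ξ = ∫ K(ξ,η) f(ξ-η) g(η) dη`
converges absolutely for a.e. `ξ`, defines a function in `L²(ℝⁿ)`, and
`‖h‖_{L²} ≤ (∑ j, M j) ‖f‖_{L²} ‖g‖_{L²}`. -/
theorem stmt_0 (n : ℕ) (hn : 1 ≤ n) (N : ℕ)
    (K : Fin N → ((Fin n → ℝ) × (Fin n → ℝ)) → ℂ)
    (hK : ∀ j, Measurable (K j))
    (M : Fin N → ℝ≥0∞)
    (hMfin : ∀ j, M j < ⊤)
    (hM : ∀ j,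
      M j = (essSup (fun ξ : Fin n → ℝ =>
          ∫⁻ η, ((‖K j (ξ, η)‖₊ : ℝ≥0∞)) ^ 2 ∂volume) volume) ^ (1/2 : ℝ) ∨
      M j = (essSup (fun η : Fin n → ℝ =>
          ∫⁻ ξ, ((‖K j (ξ, η)‖₊ : ℝ≥0∞)) ^ 2 ∂volume) volume) ^ (1/2 : ℝ))
    (f g : (Fin n → ℝ) → ℂ)
    (hf : MemLp f 2 volume) (hg : MemLp g 2 volume) :
    (∀ᵐ ξ : Fin n → ℝ, Integrable (fun η => (∑ j, K j (ξ, η)) * f (ξ - η) * g η) volume) ∧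
    MemLp (fun ξ => ∫ η, (∑ j, K j (ξ, η)) * f (ξ - η) * g η ∂volume) 2 volume ∧
    eLpNorm (fun ξ => ∫ η, (∑ j, K j (ξ, η)) * f (ξ - η) * g η ∂volume) 2 volume
      ≤ (∑ j, M j) * eLpNorm f 2 volume * eLpNorm g 2 volume := by
  have hfm := hf.1
  have hgm := hg.1
  set H : Fin N → (Fin n → ℝ) → ℝ≥0∞ :=
    fun j ξ => ∫⁻ η, ‖K j (ξ, η)‖ₑ * ‖f (ξ - η)‖ₑ * ‖g η‖ₑ with hH
  have hHprod : ∀ j, AEMeasurable (fun p : (Fin n → ℝ) × (Fin n → ℝ) =>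
      ‖K j (p.1, p.2)‖ₑ * ‖f (p.1 - p.2)‖ₑ * ‖g p.2‖ₑ)
      ((volume : Measure (Fin n → ℝ)).prod volume) := fun j =>
    ((hK j).enorm.aemeasurable.mul (ae_sub hfm).enorm).mul hgm.comp_snd.enorm
  have hHm : ∀ j, AEMeasurable (H j) volume := fun j => (hHprod j).lintegral_prod_right'
  have hHj : ∀ j, eLpNorm (H j) 2 volume ≤ M j * eLpNorm f 2 volume * eLpNorm g 2 volume := by
    intro j
    have key : ∀ S : ℝ≥0∞, M j = S ^ (1/2 : ℝ) → ∫⁻ ξ, (H j ξ) ^ 2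
        ≤ S * (∫⁻ ξ, ‖f ξ‖ₑ ^ 2) * ∫⁻ ξ, ‖g ξ‖ₑ ^ 2 →
        eLpNorm (H j) 2 volume ≤ M j * eLpNorm f 2 volume * eLpNorm g 2 volume := by
      intro S hS h
      have hS2 : M j ^ 2 = S := by
        rw [hS, ← ENNReal.rpow_two, ← ENNReal.rpow_mul]; norm_num
      rw [← eLpNorm_two_sq, ← eLpNorm_two_sq, ← hS2, ← mul_pow, ← mul_pow] at h
      have h' : (eLpNorm (H j) 2 volume) ^ 2 ≤ _ := (eLpNorm_two_sq volume (H j)).le.trans h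
      exact (ENNReal.pow_le_pow_left_iff two_ne_zero).1 h'
    rcases hM j with h | h
    · exact key _ h (case_one (K j) (hK j) _ rfl f g hfm hgm)
    · exact key _ h (case_two (K j) (hK j) _ rfl f g hfm hgm)
  have hsum : eLpNorm (∑ j, H j) 2 volume
      ≤ (∑ j, M j) * eLpNorm f 2 volume * eLpNorm g 2 volume := by
    refine (eLpNorm_sum_le (fun j _ => (hHm j).aestronglyMeasurable) (by norm_num)).trans ?_
    rw [Finset.sum_mul, Finset.sum_mul]
    exact Finset.sum_le_sum fun j _ => hHj j
  have hfin : (∑ j, M j) * eLpNorm f 2 volume * eLpNorm g 2 volume < ⊤ :=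
    ENNReal.mul_lt_top (ENNReal.mul_lt_top (ENNReal.sum_lt_top.2 fun j _ => hMfin j) hf.2) hg.2
  have hpt : ∀ ξ, ∫⁻ η, ‖(∑ j, K j (ξ, η)) * f (ξ - η) * g η‖ₑ ≤ (∑ j, H j) ξ := by
    intro ξ
    rw [Finset.sum_apply]
    simp only [hH]
    have hk : ∀ j, AEMeasurable (fun η => ‖K j (ξ, η)‖ₑ * ‖f (ξ - η)‖ₑ * ‖g η‖ₑ) volume :=
      fun j => ((((hK j).comp measurable_prodMk_left).enorm.aemeasurable.mul
        (ae_sub_left hfm ξ).enorm).mul hgm.enorm)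
    rw [← lintegral_finsetSum' _ (fun j _ => hk j)]
    refine lintegral_mono fun η => ?_
    simp only [enorm_mul]
    rw [← Finset.sum_mul, ← Finset.sum_mul]
    gcongr
    exact enorm_sum_le _ _
  have hKs : ∀ ξ, Measurable (fun η => ∑ j, K j (ξ, η)) := fun ξ =>
    Finset.measurable_fun_sum _ fun j _ => (hK j).comp measurable_prodMk_left
  have hbound : eLpNorm (fun ξ => ∫ η, (∑ j, K j (ξ, η)) * f (ξ - η) * g η ∂volume) 2 volume
      ≤ (∑ j, M j) * eLpNorm f 2 volume * eLpNorm g 2 volume := by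
    refine le_trans (eLpNorm_mono_enorm fun ξ => ?_) hsum
    exact (enorm_integral_le_lintegral_enorm _).trans (hpt ξ)
  refine ⟨?_, ⟨?_, hbound.trans_lt hfin⟩, hbound⟩
  · have h1 : ∫⁻ ξ, ((∑ j, H j) ξ) ^ 2 ≠ ⊤ := by
      have := eLpNorm_two_sq volume (∑ j, H j)
      simp only [enorm_eq_self] at this
      rw [← this]
      exact ENNReal.pow_ne_top (hsum.trans_lt hfin).ne
    have h2 := ae_lt_top' ((Finset.aemeasurable_sum _ fun j _ => hHm j).pow_const 2) h1
    filter_upwards [h2] with ξ hξ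
    refine ⟨((hKs ξ).aestronglyMeasurable.mul (ae_sub_left hfm ξ)).mul hgm, ?_⟩
    refine (hpt ξ).trans_lt ?_
    by_contra hc
    rw [not_lt, top_le_iff] at hc
    simp [hc] at hξ
  · have : AEStronglyMeasurable (fun p : (Fin n → ℝ) × (Fin n → ℝ) =>
        (∑ j, K j (p.1, p.2)) * f (p.1 - p.2) * g p.2)
        ((volume : Measure (Fin n → ℝ)).prod volume) :=
      ((Finset.measurable_fun_sum _ fun j _ => hK j).aestronglyMeasurable.mul (ae_sub hfm)).mul
        hgm.comp_snd
    exact this.integral_prod_right'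
end

section
/- Let d ≥ 0, n = 3+d, and let k₁, k₂, k₃ be real numbers with k_j > n/6 for j = 1,2,3. Then there exists δ₀ > 0 such that for every δ with 0 ≤ δ ≤ δ₀ one has ∫_{ℝⁿ} W_{k₁,k₂,k₃,δ}(η)^{−2} dη = ∫_{ℝⁿ} (1+η₁²+|η''|²)^{−k₁} (1+η₂²+|η''|²)^{−k₂} (1+η₃²+|η''|²)^{−k₃} (1+|η|²)^{δ} dη < ∞. -/
open MeasureTheory

noncomputable section

/-- Frequency space `ℝⁿ` with `n = 3 + d`, written as `η = (η₁, η₂, η₃, η'')`. -/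
abbrev Sp (d : ℕ) : Type := ℝ × ℝ × ℝ × EuclideanSpace ℝ (Fin d)

/-- The anisotropic weight
`W_{k₁,k₂,k₃,δ}(η) = ⟨(η₁,η'')⟩^{k₁} ⟨(η₂,η'')⟩^{k₂} ⟨(η₃,η'')⟩^{k₃} ⟨η⟩^{-δ}`,
where `⟨ζ⟩ = (1+|ζ|²)^{1/2}`. -/
def W (d : ℕ) (k₁ k₂ k₃ δ : ℝ) (η : Sp d) : ℝ :=
  (1 + η.1 ^ 2 + ‖η.2.2.2‖ ^ 2) ^ (k₁ / 2) *
  (1 + η.2.1 ^ 2 + ‖η.2.2.2‖ ^ 2) ^ (k₂ / 2) *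
  (1 + η.2.2.1 ^ 2 + ‖η.2.2.2‖ ^ 2) ^ (k₃ / 2) *
  (1 + η.1 ^ 2 + η.2.1 ^ 2 + η.2.2.1 ^ 2 + ‖η.2.2.2‖ ^ 2) ^ (-δ / 2)

theorem aux_split (x r k p q : ℝ) (hp : 0 ≤ p) (hq : 0 ≤ q) (hk : p + q ≤ k) :
    (1 + x ^ 2 + r ^ 2) ^ (-k) ≤ (1 + x ^ 2) ^ (-p) * (1 + r ^ 2) ^ (-q) := by
  have hx := sq_nonneg x
  have hr := sq_nonneg r
  calc (1 + x ^ 2 + r ^ 2) ^ (-k) ≤ (1 + x ^ 2 + r ^ 2) ^ (-p + -q) :=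
        Real.rpow_le_rpow_of_exponent_le (by linarith) (by linarith)
    _ = (1 + x ^ 2 + r ^ 2) ^ (-p) * (1 + x ^ 2 + r ^ 2) ^ (-q) :=
        Real.rpow_add (by positivity) _ _
    _ ≤ _ := mul_le_mul
        (Real.rpow_le_rpow_of_nonpos (by positivity) (by linarith) (by linarith))
        (Real.rpow_le_rpow_of_nonpos (by positivity) (by linarith) (by linarith))
        (by positivity) (by positivity)

theorem aux_W (d : ℕ) (k₁ k₂ k₃ δ : ℝ) (η : Sp d) (hδ : 0 ≤ δ) :
    (W d k₁ k₂ k₃ δ η) ^ (-2 : ℝ) ≤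
      (1 + η.1 ^ 2 + ‖η.2.2.2‖ ^ 2) ^ (-(k₁ - δ)) *
      (1 + η.2.1 ^ 2 + ‖η.2.2.2‖ ^ 2) ^ (-(k₂ - δ)) *
      (1 + η.2.2.1 ^ 2 + ‖η.2.2.2‖ ^ 2) ^ (-(k₃ - δ)) := by
  unfold W
  have ha := sq_nonneg η.1
  have hb := sq_nonneg η.2.1
  have hc := sq_nonneg η.2.2.1
  have hr := sq_nonneg ‖η.2.2.2‖
  generalize η.1 ^ 2 = a at *
  generalize η.2.1 ^ 2 = b at *
  generalize η.2.2.1 ^ 2 = c at *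
  generalize ‖η.2.2.2‖ ^ 2 = r at *
  have hA : 0 < 1 + a + r := by positivity
  have hB : 0 < 1 + b + r := by positivity
  have hC : 0 < 1 + c + r := by positivity
  have hD : 0 < 1 + a + b + c + r := by positivity
  have key : 1 + a + b + c + r ≤ (1 + a + r) * (1 + b + r) * (1 + c + r) := by
    have : 0 ≤ (1 + a + r) * (1 + b + r) * (1 + c + r) - (1 + a + b + c + r) := by
      ring_nf; positivity
    linarith
  rw [Real.mul_rpow (by positivity) (by positivity), Real.mul_rpow (by positivity) (by positivity),
    Real.mul_rpow (by positivity) (by positivity), ← Real.rpow_mul hA.le, ← Real.rpow_mul hB.le,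
    ← Real.rpow_mul hC.le, ← Real.rpow_mul hD.le]
  have e : ∀ k : ℝ, k / 2 * (-2) = -k := fun k => by ring
  rw [e, e, e, e, neg_neg]
  have e' : ∀ k : ℝ, -(k - δ) = -k + δ := fun k => by ring
  rw [e', e', e', Real.rpow_add hA, Real.rpow_add hB, Real.rpow_add hC]
  calc _ ≤ (1 + a + r) ^ (-k₁) * (1 + b + r) ^ (-k₂) * (1 + c + r) ^ (-k₃) *
        ((1 + a + r) * (1 + b + r) * (1 + c + r)) ^ δ := by gcongr
    _ = _ := by
      rw [Real.mul_rpow (by positivity) hC.le, Real.mul_rpow hA.le hB.le]; ring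

theorem aux_meas (d : ℕ) (k₁ k₂ k₃ δ : ℝ) :
    Measurable (fun η : Sp d => (W d k₁ k₂ k₃ δ η) ^ (-2 : ℝ)) := by
  unfold W
  fun_prop

theorem stmt_1 (d : ℕ) (k₁ k₂ k₃ : ℝ)
    (h₁ : ((3 : ℝ) + d) / 6 < k₁) (h₂ : ((3 : ℝ) + d) / 6 < k₂)
    (h₃ : ((3 : ℝ) + d) / 6 < k₃) :
    ∃ δ₀ > (0 : ℝ), ∀ δ : ℝ, 0 ≤ δ → δ ≤ δ₀ →
      Integrable (fun η : Sp d => (W d k₁ k₂ k₃ δ η) ^ (-2 : ℝ)) volume := by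
  obtain ⟨ε, hε, e₁, e₂, e₃⟩ : ∃ ε > (0 : ℝ), ((3 : ℝ) + d) / 6 + 2 * ε ≤ k₁ ∧
      ((3 : ℝ) + d) / 6 + 2 * ε ≤ k₂ ∧ ((3 : ℝ) + d) / 6 + 2 * ε ≤ k₃ := by
    refine ⟨(min k₁ (min k₂ k₃) - (3 + d) / 6) / 2, ?_, ?_, ?_, ?_⟩
    · have : ((3 : ℝ) + d) / 6 < min k₁ (min k₂ k₃) := lt_min h₁ (lt_min h₂ h₃)
      linarith
    · linarith [min_le_left k₁ (min k₂ k₃)]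
    · linarith [min_le_right k₁ (min k₂ k₃), min_le_left k₂ k₃]
    · linarith [min_le_right k₁ (min k₂ k₃), min_le_right k₂ k₃]
  refine ⟨ε, hε, fun δ hδ0 hδ => ?_⟩
  have hd : (0 : ℝ) ≤ d := Nat.cast_nonneg d
  set p : ℝ := (1 + ε) / 2 with hp
  set q : ℝ := d / 6 + ε / 2 with hq
  have hp0 : 0 ≤ p := by positivity
  have hq0 : 0 ≤ q := by positivity
  have I1 : Integrable (fun x : ℝ => (1 + x ^ 2) ^ (-p)) volume := by
    have := integrable_rpow_neg_one_add_norm_sq (E := ℝ) (μ := volume) (r := 1 + ε)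
      (by simp; linarith)
    simp only [Real.norm_eq_abs, sq_abs] at this
    convert this using 3
    rw [hp]; ring
  have I2 : Integrable (fun y : EuclideanSpace ℝ (Fin d) => (1 + ‖y‖ ^ 2) ^ (-(3 * q))) volume := by
    have := integrable_rpow_neg_one_add_norm_sq (E := EuclideanSpace ℝ (Fin d)) (μ := volume)
      (r := 6 * q) (by simp [hq]; linarith)
    convert this using 3
    ring
  have I := I1.mul_prod (I1.mul_prod (I1.mul_prod I2))
  refine Integrable.mono' I (aux_meas d k₁ k₂ k₃ δ).aestronglyMeasurable (ae_of_all _ fun η => ?_)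
  have hW : 0 ≤ W d k₁ k₂ k₃ δ η := by unfold W; positivity
  rw [Real.norm_of_nonneg (Real.rpow_nonneg hW _)]
  have hr : (0 : ℝ) < 1 + ‖η.2.2.2‖ ^ 2 := by positivity
  have e : (1 + ‖η.2.2.2‖ ^ 2) ^ (-(3 * q)) = (1 + ‖η.2.2.2‖ ^ 2) ^ (-q) *
      (1 + ‖η.2.2.2‖ ^ 2) ^ (-q) * (1 + ‖η.2.2.2‖ ^ 2) ^ (-q) := by
    rw [← Real.rpow_add hr, ← Real.rpow_add hr]; congr 1; ring
  refine (aux_W d k₁ k₂ k₃ δ η hδ0).trans ?_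
  have s₁ := aux_split η.1 ‖η.2.2.2‖ (k₁ - δ) p q hp0 hq0 (by rw [hp, hq]; linarith)
  have s₂ := aux_split η.2.1 ‖η.2.2.2‖ (k₂ - δ) p q hp0 hq0 (by rw [hp, hq]; linarith)
  have s₃ := aux_split η.2.2.1 ‖η.2.2.2‖ (k₃ - δ) p q hp0 hq0 (by rw [hp, hq]; linarith)
  refine (mul_le_mul (mul_le_mul s₁ s₂ (by positivity) (by positivity)) s₃
    (by positivity) (by positivity)).trans (le_of_eq ?_)
  rw [e]; ring
end
end

section
/- Let m < −5/2, let α₁, α₂, α₃ ∈ S^m(ℝ), and set α(η) = α₁(η₁)α₂(η₂)α₃(η₃) for η = (η₁,η₂,η₃) ∈ ℝ³. Let b : ℝ³ → ℂ be measurable and suppose that for every δ > 0 the function η ↦ ⟨η₁⟩^{−m−1/2}⟨η₂⟩^{−m−1/2}⟨η₃⟩^{−m−1/2}⟨η⟩^{1−δ} b(η) belongs to L²(ℝ³). Then b ∈ L¹(ℝ³), the convolution (α⋆b)(η) = ∫_{ℝ³} α(η−ζ) b(ζ) dζ converges absolutely for every η, and the error E(η) := (α⋆b)(η) − α(η)·∫_{ℝ³}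 b(ζ) dζ satisfies: for all 0 < μ₀ < μ₁ and every r > 0 with r + 2/(−m−1/2) < 1, ∫_{Υ_{μ₀,μ₁}} ⟨η⟩^{−6m−3+r} |E(η)|² dη < ∞, where Υ_{μ₀,μ₁} is the union over i ∈ {1,2,3} of the sets {η ∈ ℝ³ : η_i ≠ 0 and μ₀ < |η_j/η_i| < μ₁ for both indices j ≠ i}. -/
open MeasureTheory

noncomputable section

/-- The symbol class `S^m(ℝ)`: `a` is smooth and `|a^{(k)}(s)| ≤ C_k (1+|s|)^{m-k}`. -/
def IsSymbol (m : ℝ) (a : ℝ → ℂ) : Prop :=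
  ContDiff ℝ (⊤ : ℕ∞) a ∧ ∀ k : ℕ, ∃ C : ℝ, ∀ s : ℝ,
    ‖iteratedDeriv k a s‖ ≤ C * (1 + |s|) ^ (m - k)

/-- The bracket `⟨s⟩ = (1+s²)^{1/2}` for `s ∈ ℝ`. -/
def br (s : ℝ) : ℝ := Real.sqrt (1 + s ^ 2)

/-- The bracket `⟨η⟩ = (1+|η|²)^{1/2}` for `η ∈ ℝ³`. -/
def br3 (η : ℝ × ℝ × ℝ) : ℝ := Real.sqrt (1 + η.1 ^ 2 + η.2.1 ^ 2 + η.2.2 ^ 2)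

/-- The elliptic conic region `Υ_{μ₀,μ₁}`: the union over `i ∈ {1,2,3}` of the
sets where `η_i ≠ 0` and `μ₀ < |η_j/η_i| < μ₁` for both indices `j ≠ i`. -/
def Upsilon (μ₀ μ₁ : ℝ) : Set (ℝ × ℝ × ℝ) :=
  {η | (η.1 ≠ 0 ∧ μ₀ < |η.2.1 / η.1| ∧ |η.2.1 / η.1| < μ₁ ∧
          μ₀ < |η.2.2 / η.1| ∧ |η.2.2 / η.1| < μ₁) ∨
       (η.2.1 ≠ 0 ∧ μ₀ < |η.1 / η.2.1| ∧ |η.1 / η.2.1| < μ₁ ∧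
          μ₀ < |η.2.2 / η.2.1| ∧ |η.2.2 / η.2.1| < μ₁) ∨
       (η.2.2 ≠ 0 ∧ μ₀ < |η.1 / η.2.2| ∧ |η.1 / η.2.2| < μ₁ ∧
          μ₀ < |η.2.1 / η.2.2| ∧ |η.2.1 / η.2.2| < μ₁)}

lemma le_of_sq_le_sq_aux {a b : ℝ} (h : a ^ 2 ≤ b ^ 2) (hb : 0 ≤ b) : a ≤ b :=
  (le_abs_self a).trans (abs_le_of_sq_le_sq h hb)

lemma br_ge_one (s : ℝ) : 1 ≤ br s := by
  unfold br; rw [Real.one_le_sqrt]; nlinarith [sq_nonneg s]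

lemma br_pos (s : ℝ) : 0 < br s := lt_of_lt_of_le one_pos (br_ge_one s)

lemma br_sq (s : ℝ) : br s ^ 2 = 1 + s ^ 2 := by
  unfold br; rw [Real.sq_sqrt]; positivity

lemma br3_sq (η : ℝ × ℝ × ℝ) : br3 η ^ 2 = 1 + η.1 ^ 2 + η.2.1 ^ 2 + η.2.2 ^ 2 := by
  unfold br3; rw [Real.sq_sqrt]; positivity

lemma br3_ge_one (η : ℝ × ℝ × ℝ) : 1 ≤ br3 η := by
  unfold br3; rw [Real.one_le_sqrt]
  nlinarith [sq_nonneg η.1, sq_nonneg η.2.1, sq_nonneg η.2.2]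

lemma br_le_br3_1 (η : ℝ × ℝ × ℝ) : br η.1 ≤ br3 η := by
  unfold br3 br; apply Real.sqrt_le_sqrt; nlinarith [sq_nonneg η.2.1, sq_nonneg η.2.2]

lemma br_le_br3_2 (η : ℝ × ℝ × ℝ) : br η.2.1 ≤ br3 η := by
  unfold br3 br; apply Real.sqrt_le_sqrt; nlinarith [sq_nonneg η.1, sq_nonneg η.2.2]

lemma br_le_br3_3 (η : ℝ × ℝ × ℝ) : br η.2.2 ≤ br3 η := by
  unfold br3 br; apply Real.sqrt_le_sqrt; nlinarith [sq_nonneg η.1, sq_nonneg η.2.1]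

lemma abs_le_br (s : ℝ) : |s| ≤ br s := by
  unfold br; apply Real.abs_le_sqrt; linarith

lemma br_le_one_add (s : ℝ) : br s ≤ 1 + |s| := by
  unfold br; rw [Real.sqrt_le_left (by positivity)]
  nlinarith [abs_nonneg s, sq_abs s]

lemma br_mono_half {x z : ℝ} (h : |x| / 2 ≤ |z|) : br x / 2 ≤ br z := by
  have h1 := br_sq x
  have h2 := br_sq z
  refine le_of_sq_le_sq_aux ?_ (br_pos z).le
  have : (|x|/2)^2 ≤ |z|^2 := by gcongr
  rw [div_pow, sq_abs, sq_abs] at this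
  rw [div_pow, h1, h2]; linarith

lemma peetre (x y : ℝ) : br x ≤ 2 * (br (x - y) * br y) := by
  refine le_of_sq_le_sq_aux ?_ (by have := br_pos (x-y); have := br_pos y; positivity)
  rw [mul_pow, mul_pow, br_sq, br_sq, br_sq]
  nlinarith [sq_nonneg (x - 2*y), sq_nonneg ((x-y)*y)]

lemma continuous_br : Continuous br := by unfold br; fun_prop
lemma continuous_br3 : Continuous br3 := by unfold br3; fun_prop

lemma measurable_br_rpow (q : ℝ) : Measurable (fun s => br s ^ q) :=
  continuous_br.measurable.pow_const q

lemma lint_br {q : ℝ} (hq : 1 < q) : ∫⁻ s, ENNReal.ofReal (br s ^ (-q)) < ⊤ := by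
  have h := integrable_rpow_neg_one_add_norm_sq (E := ℝ) (μ := volume) (r := q) (by simpa using hq)
  have h2 : (fun s : ℝ => br s ^ (-q)) = fun x : ℝ => (1 + ‖x‖^2) ^ (-q/2) := by
    ext s
    unfold br
    rw [Real.sqrt_eq_rpow, ← Real.rpow_mul (by positivity)]
    simp only [Real.norm_eq_abs, sq_abs]
    congr 1; ring
  rw [← h2] at h
  exact h.lintegral_lt_top

lemma sym_bound {m : ℝ} (hm : m < -(5/2:ℝ)) {a : ℝ → ℂ} (ha : IsSymbol m a) :
    ∃ C : ℝ, 0 < C ∧ (∀ s, ‖a s‖ ≤ C * br s ^ m) ∧ (∀ s, ‖deriv a s‖ ≤ C * br s ^ (m-1)) := by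
  obtain ⟨C0, h0⟩ := ha.2 0
  obtain ⟨C1, h1⟩ := ha.2 1
  have key : ∀ (s q : ℝ), q ≤ 0 → (1+|s|)^q ≤ br s ^ q := fun s q hq =>
    Real.rpow_le_rpow_of_nonpos (br_pos s) (br_le_one_add s) hq
  refine ⟨|C0| + |C1| + 1, by positivity, fun s => ?_, fun s => ?_⟩
  · have := h0 s
    simp only [iteratedDeriv_zero, CharP.cast_eq_zero, sub_zero] at this
    refine this.trans ?_
    have h2 := key s m (by linarith)
    have : 0 ≤ (1+|s|)^m := by positivity
    have h4 : C0 ≤ |C0| + |C1| + 1 := by linarith [le_abs_self C0, abs_nonneg C1]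
    gcongr
  · have := h1 s
    simp only [iteratedDeriv_one, Nat.cast_one] at this
    refine this.trans ?_
    have h2 := key s (m-1) (by linarith)
    have : 0 ≤ (1+|s|)^(m-1) := by positivity
    have h4 : C1 ≤ |C0| + |C1| + 1 := by linarith [le_abs_self C1, abs_nonneg C0]
    gcongr

lemma upsilon_bound {μ₀ μ₁ : ℝ} (h0 : 0 < μ₀) (h1 : μ₀ < μ₁) :
    ∃ c : ℝ, 0 < c ∧ c ≤ 1 ∧ ∀ η ∈ Upsilon μ₀ μ₁,
      c * br3 η ≤ br η.1 ∧ c * br3 η ≤ br η.2.1 ∧ c * br3 η ≤ br η.2.2 := by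
  have hμ1 : 0 < μ₁ := h0.trans h1
  set M : ℝ := 1 + μ₁ + 1/μ₀ + μ₁/μ₀ with hM
  have ha : 0 < 1/μ₀ := by positivity
  have hb : 0 < μ₁/μ₀ := by positivity
  have hM1 : 1 ≤ M := by linarith
  -- main comparison
  have comp : ∀ x y z : ℝ, x ≠ 0 → μ₀ < |y/x| → |y/x| < μ₁ → μ₀ < |z/x| → |z/x| < μ₁ →
      |x| ≤ M * |x| ∧ |y| ≤ M * |x| ∧ |z| ≤ M*|x| ∧ |x| ≤ M * |y| ∧ |y| ≤ M * |y| ∧ |z| ≤ M*|y| ∧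
      |x| ≤ M * |z| ∧ |y| ≤ M * |z| ∧ |z| ≤ M*|z| := by
    intro x y z hx h2 h3 h4 h5
    have hx' : 0 < |x| := abs_pos.mpr hx
    rw [abs_div] at h2 h3 h4 h5
    rw [lt_div_iff₀ hx'] at h2 h4
    rw [div_lt_iff₀ hx'] at h3 h5
    have e1 : ∀ u : ℝ, |u| ≤ M * |u| := fun u => by nlinarith [abs_nonneg u]
    have e2 : ∀ u : ℝ, |u| < μ₁ * |x| → |u| ≤ M * |x| := fun u hu =>
      hu.le.trans (by gcongr; linarith)
    have e3 : ∀ u : ℝ, μ₀ * |x| < |u| → |x| ≤ M * |u| := fun u hu => by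
      have : |x| ≤ 1/μ₀ * |u| := by rw [one_div, ← div_eq_inv_mul, le_div_iff₀ h0]; linarith
      refine this.trans (by gcongr; linarith)
    have e4 : ∀ u v : ℝ, μ₀ * |x| < |u| → |v| < μ₁ * |x| → |v| ≤ M * |u| := fun u v hu hv => by
      have : |x| ≤ 1/μ₀ * |u| := by rw [one_div, ← div_eq_inv_mul, le_div_iff₀ h0]; linarith
      have h7 : |v| ≤ μ₁/μ₀ * |u| := by
        calc |v| ≤ μ₁ * |x| := hv.le
          _ ≤ μ₁ * (1/μ₀ * |u|) := by gcongr
          _ = _ := by ring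
      refine h7.trans (by gcongr; linarith)
    exact ⟨e1 x, e2 y h3, e2 z h5, e3 y h2, e1 y, e4 y z h2 h5, e3 z h4, e4 z y h4 h3, e1 z⟩
  have fin : ∀ (η : ℝ × ℝ × ℝ) (u : ℝ), |η.1| ≤ M * |u| → |η.2.1| ≤ M * |u| → |η.2.2| ≤ M * |u| →
      1/(2*M) * br3 η ≤ br u := by
    intro η u h2 h3 h4
    refine le_of_sq_le_sq_aux ?_ (br_pos u).le
    have sqs : ∀ v : ℝ, |v| ≤ M * |u| → v^2 ≤ M^2 * u^2 := fun v hv => by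
      rw [← sq_abs v, ← sq_abs u, ← mul_pow]; gcongr
    have := sqs _ h2
    have := sqs _ h3
    have := sqs _ h4
    rw [mul_pow, br3_sq, br_sq, div_pow, one_pow, one_div, ← div_eq_inv_mul, div_le_iff₀ (by positivity)]
    nlinarith [sq_nonneg u]
  refine ⟨1/(2*M), by positivity, ?_, ?_⟩
  · rw [div_le_one (by positivity)]; linarith
  · rintro η (⟨a, b, c, d, e⟩ | ⟨a, b, c, d, e⟩ | ⟨a, b, c, d, e⟩)
    · obtain ⟨h1, h2, h3, h4, h5, h6, h7, h8, h9⟩ := comp _ _ _ a b c d e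
      exact ⟨fin _ _ h1 h2 h3, fin _ _ h4 h5 h6, fin _ _ h7 h8 h9⟩
    · obtain ⟨h1, h2, h3, h4, h5, h6, h7, h8, h9⟩ := comp _ _ _ a b c d e
      exact ⟨fin _ _ h5 h4 h6, fin _ _ h2 h1 h3, fin _ _ h8 h7 h9⟩
    · obtain ⟨h1, h2, h3, h4, h5, h6, h7, h8, h9⟩ := comp _ _ _ a b c d e
      exact ⟨fin _ _ h5 h6 h4, fin _ _ h8 h9 h7, fin _ _ h2 h3 h1⟩

/-- Schur test. -/
lemma schur_test {X : Type*} [MeasurableSpace X] (μ : Measure X) [SFinite μ]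
    (K : X → X → ENNReal) (hK : Measurable (Function.uncurry K))
    (V : X → ENNReal) (hV : Measurable V) (hV0 : ∀ x, V x ≠ 0) (hVt : ∀ x, V x ≠ ⊤)
    (C : ENNReal) (h1 : ∀ x, ∫⁻ y, K x y * V y ∂μ ≤ C * V x)
    (h2 : ∀ y, ∫⁻ x, K x y * V x ∂μ ≤ C * V y) (f : X → ENNReal) (hf : Measurable f) :
    ∫⁻ x, (∫⁻ y, K x y * f y ∂μ) ^ 2 ∂μ ≤ C ^ 2 * ∫⁻ y, f y ^ 2 ∂μ := by
  have hKx : ∀ x, Measurable (K x) := fun x => hK.comp measurable_prodMk_left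
  have hg : ∀ x, Measurable fun y => K x y * ((V y)⁻¹ * f y ^ 2) := fun x =>
    (hKx x).mul (hV.inv.mul (hf.pow_const 2))
  have hKy : ∀ y, Measurable fun x => K x y * V x := fun y =>
    (hK.comp (measurable_prodMk_right (y := y))).mul hV
  have sqrt_sq : ∀ a : ENNReal, (a ^ (1/2:ℝ)) ^ (2:ℝ) = a := fun a => by
    rw [← ENNReal.rpow_mul]; norm_num
  have cs : ∀ x, (∫⁻ y, K x y * f y ∂μ) ^ 2 ≤
      (C * V x) * ∫⁻ y, K x y * ((V y)⁻¹ * f y ^ 2) ∂μ := by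
    intro x
    have e : ∀ y, K x y * f y = (K x y * V y) ^ (1/2:ℝ) * (K x y * ((V y)⁻¹ * f y ^ 2)) ^ (1/2:ℝ) := by
      intro y
      rw [← ENNReal.mul_rpow_of_nonneg _ _ (by norm_num)]
      have : K x y * V y * (K x y * ((V y)⁻¹ * f y ^ 2)) = (K x y * f y) ^ (2:ℝ) := by
        rw [ENNReal.rpow_ofNat]
        calc _ = (V y * (V y)⁻¹) * (K x y * f y) ^ 2 := by ring
          _ = _ := by rw [ENNReal.mul_inv_cancel (hV0 y) (hVt y), one_mul]
      rw [this, ← ENNReal.rpow_mul]; norm_num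
    have hol := ENNReal.lintegral_mul_le_Lp_mul_Lq μ Real.HolderConjugate.two_two
      (f := fun y => (K x y * V y) ^ (1/2:ℝ))
      (g := fun y => (K x y * ((V y)⁻¹ * f y ^ 2)) ^ (1/2:ℝ))
      (((hKx x).mul hV).pow_const _).aemeasurable
      ((hg x).pow_const _).aemeasurable
    simp only [sqrt_sq, Pi.mul_apply] at hol
    simp_rw [← e] at hol
    calc (∫⁻ y, K x y * f y ∂μ) ^ 2 ≤ ((∫⁻ y, K x y * V y ∂μ) ^ (1/2:ℝ) *
          (∫⁻ y, K x y * ((V y)⁻¹ * f y ^ 2) ∂μ) ^ (1/2:ℝ)) ^ 2 := by gcongr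
      _ = (∫⁻ y, K x y * V y ∂μ) * ∫⁻ y, K x y * ((V y)⁻¹ * f y ^ 2) ∂μ := by
        rw [← ENNReal.rpow_ofNat, ENNReal.mul_rpow_of_nonneg _ _ (by norm_num), sqrt_sq, sqrt_sq]
      _ ≤ _ := by gcongr; exact h1 x
  have hm2 : Measurable (fun p : X × X => V p.1 * (K p.1 p.2 * ((V p.2)⁻¹ * f p.2 ^ 2))) :=
    (hV.comp measurable_fst).mul (hK.mul ((hV.inv.comp measurable_snd).mul
      ((hf.comp measurable_snd).pow_const _)))
  calc ∫⁻ x, (∫⁻ y, K x y * f y ∂μ) ^ 2 ∂μ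
      ≤ ∫⁻ x, (C * V x) * ∫⁻ y, K x y * ((V y)⁻¹ * f y ^ 2) ∂μ ∂μ := lintegral_mono cs
    _ = ∫⁻ x, C * ∫⁻ y, V x * (K x y * ((V y)⁻¹ * f y ^ 2)) ∂μ ∂μ := by
        congr 1; ext x
        rw [lintegral_const_mul _ (hg x), mul_assoc]
    _ = C * ∫⁻ x, ∫⁻ y, V x * (K x y * ((V y)⁻¹ * f y ^ 2)) ∂μ ∂μ :=
        lintegral_const_mul _ hm2.lintegral_prod_right'
    _ = C * ∫⁻ y, ∫⁻ x, V x * (K x y * ((V y)⁻¹ * f y ^ 2)) ∂μ ∂μ := by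
        rw [lintegral_lintegral_swap hm2.aemeasurable]
    _ = C * ∫⁻ y, ((V y)⁻¹ * f y ^ 2) * ∫⁻ x, K x y * V x ∂μ ∂μ := by
        congr 2; ext y
        rw [← lintegral_const_mul _ (hKy y)]
        congr 1; ext x; ring
    _ ≤ C * ∫⁻ y, C * f y ^ 2 ∂μ := by
        refine mul_le_mul_right (lintegral_mono fun y => ?_) C
        calc ((V y)⁻¹ * f y ^ 2) * ∫⁻ x, K x y * V x ∂μ ≤ ((V y)⁻¹ * f y ^ 2) * (C * V y) := by
              gcongr; exact h2 y
          _ = (V y * (V y)⁻¹) * (C * f y ^ 2) := by ring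
          _ = _ := by rw [ENNReal.mul_inv_cancel (hV0 y) (hVt y), one_mul]
    _ = _ := by rw [lintegral_const_mul _ (hf.pow_const _), sq, mul_assoc]

/-- one-dimensional kernel -/
def ker1 (p e x y : ℝ) : ℝ := br (x - y) ^ (-p - 1/2) + br x ^ (-(1/2) - e) * br y ^ (-p)

lemma ker1_nonneg (p e x y : ℝ) : 0 ≤ ker1 p e x y := by
  unfold ker1
  have := (br_pos (x-y)).le
  have := (br_pos x).le
  have := (br_pos y).le
  positivity

lemma measurable_ker1 (p e : ℝ) : Measurable (fun z : ℝ × ℝ => ker1 p e z.1 z.2) := by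
  unfold ker1
  have := measurable_br_rpow
  exact ((this _).comp (measurable_fst.sub measurable_snd)).add
    (((this _).comp measurable_fst).mul ((this _).comp measurable_snd))

lemma ker1_pt {p e : ℝ} (x y : ℝ) :
    ker1 p e x y * br y ^ (-(1/2:ℝ)) ≤
      br x ^ (-(1/2:ℝ)) * (2 * br (x-y) ^ (-p)) + br x ^ (-(1/2) - e) * br y ^ (-(p+1/2)) := by
  have hx := br_pos x
  have hy := br_pos y
  have hz := br_pos (x-y)
  have P := peetre x y
  have h1 : br y ^ (-(1/2:ℝ)) ≤ br x ^ (-(1/2:ℝ)) * (2 * br (x-y) ^ (1/2:ℝ)) := by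
    rw [Real.rpow_neg hx.le, Real.rpow_neg hy.le, inv_le_iff_one_le_mul₀ (by positivity)]
    rw [mul_assoc, ← div_eq_inv_mul, one_le_div (by positivity)]
    calc br x ^ (1/2:ℝ) ≤ (2 * (br (x - y) * br y)) ^ (1/2:ℝ) := by gcongr
      _ = 2 ^ (1/2:ℝ) * (br (x-y) ^ (1/2:ℝ) * br y ^ (1/2:ℝ)) := by
        rw [Real.mul_rpow (by norm_num) (by positivity), Real.mul_rpow hz.le hy.le]
      _ ≤ 2 * (br (x-y) ^ (1/2:ℝ) * br y ^ (1/2:ℝ)) := by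
        gcongr
        calc (2:ℝ)^(1/2:ℝ) ≤ 2 ^ (1:ℝ) := by
              apply Real.rpow_le_rpow_of_exponent_le <;> norm_num
          _ = 2 := by norm_num
      _ = _ := by ring
  unfold ker1
  rw [add_mul]
  have e1 : br (x-y) ^ (-p) = br (x-y) ^ (-p-1/2) * br (x-y) ^ (1/2:ℝ) := by
    rw [← Real.rpow_add hz]; ring_nf
  have e2 : br y ^ (-(p+1/2)) = br y ^ (-p) * br y ^ (-(1/2:ℝ)) := by
    rw [← Real.rpow_add hy]; ring_nf
  rw [e1, e2]
  refine add_le_add ?_ (le_of_eq (by ring))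
  calc br (x - y) ^ (-p - 1 / 2) * br y ^ (-(1 / 2:ℝ)) ≤
     br (x - y) ^ (-p - 1 / 2) * (br x ^ (-(1/2:ℝ)) * (2 * br (x-y) ^ (1/2:ℝ))) := by gcongr
    _ = _ := by ring

lemma br_neg (s : ℝ) : br (-s) = br s := by unfold br; simp

lemma ker1_pt' {p e : ℝ} (x y : ℝ) :
    ker1 p e x y * br x ^ (-(1/2:ℝ)) ≤
      br y ^ (-(1/2:ℝ)) * (2 * br (x-y) ^ (-p)) + br y ^ (-p) * br x ^ (-(1 + e)) := by
  have hx := br_pos x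
  have hy := br_pos y
  have h := ker1_pt (p := p) (e := e) y x
  unfold ker1 at h ⊢
  have e0 : br (y-x) = br (x-y) := by rw [← br_neg]; ring_nf
  rw [e0] at h
  have e2 : br x ^ (-(1+e)) = br x ^ (-(1/2) - e) * br x ^ (-(1/2:ℝ)) := by
    rw [← Real.rpow_add hx]; ring_nf
  have e3 : br x ^ (-(p+1/2)) = br x ^ (-p) * br x ^ (-(1/2:ℝ)) := by
    rw [← Real.rpow_add hx]; ring_nf
  rw [e3] at h
  rw [e2]
  linarith

lemma ker1_schur {p e : ℝ} (hp : 2 < p) (he : 0 < e) : ∃ C : ENNReal, C ≠ ⊤ ∧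
    (∀ x, ∫⁻ y, ENNReal.ofReal (ker1 p e x y) * ENNReal.ofReal (br y ^ (-(1/2:ℝ)))
      ≤ C * ENNReal.ofReal (br x ^ (-(1/2:ℝ)))) ∧
    (∀ y, ∫⁻ x, ENNReal.ofReal (ker1 p e x y) * ENNReal.ofReal (br x ^ (-(1/2:ℝ)))
      ≤ C * ENNReal.ofReal (br y ^ (-(1/2:ℝ)))) := by
  have f1 := lint_br (q := p) (by linarith)
  have f2 := lint_br (q := p + 1/2) (by linarith)
  have f3 := lint_br (q := 1 + e) (by linarith)
  set I1 := ∫⁻ s, ENNReal.ofReal (br s ^ (-p))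
  set I2 := ∫⁻ s, ENNReal.ofReal (br s ^ (-(p+1/2)))
  set I3 := ∫⁻ s, ENNReal.ofReal (br s ^ (-(1+e)))
  have mb := fun q => (measurable_br_rpow q).ennreal_ofReal
  have nn : ∀ s q : ℝ, 0 ≤ br s ^ q := fun s q => Real.rpow_nonneg (br_pos s).le q
  refine ⟨2 * I1 + I2 + I3, ?_, fun x => ?_, fun y => ?_⟩
  · have := f1.ne; have := f2.ne; have := f3.ne
    finiteness
  · calc _ ≤ ∫⁻ y, (ENNReal.ofReal (br x ^ (-(1/2:ℝ))) * (2 * ENNReal.ofReal (br (x-y) ^ (-p)))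
            + ENNReal.ofReal (br x ^ (-(1/2:ℝ))) * ENNReal.ofReal (br y ^ (-(p+1/2)))) := by
          apply lintegral_mono; intro y
          simp only
          rw [← ENNReal.ofReal_mul (ker1_nonneg _ _ _ _)]
          refine (ENNReal.ofReal_le_ofReal (ker1_pt x y)).trans ?_
          rw [ENNReal.ofReal_add (mul_nonneg (nn _ _) (mul_nonneg (by norm_num) (nn _ _)))
            (mul_nonneg (nn _ _) (nn _ _)), ENNReal.ofReal_mul (nn _ _),
            ENNReal.ofReal_mul (nn _ _), ENNReal.ofReal_mul (by norm_num), ENNReal.ofReal_ofNat]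
          gcongr
          · exact br_ge_one x
          · linarith
      _ = ENNReal.ofReal (br x ^ (-(1/2:ℝ))) * (2 * I1) + ENNReal.ofReal (br x ^ (-(1/2:ℝ))) * I2 := by
          have m1 : Measurable fun y => ENNReal.ofReal (br (x-y) ^ (-p)) :=
            (mb (-p)).comp (measurable_const.sub measurable_id)
          rw [lintegral_add_left ((m1.const_mul 2).const_mul _), lintegral_const_mul _ (m1.const_mul 2),
            lintegral_const_mul _ m1, lintegral_const_mul _ (mb _),
            lintegral_sub_left_eq_self (fun y => ENNReal.ofReal (br y ^ (-p))) x]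
      _ ≤ _ := by
        rw [← mul_add, mul_comm]; exact mul_le_mul_left le_self_add _
  · calc _ ≤ ∫⁻ x, (ENNReal.ofReal (br y ^ (-(1/2:ℝ))) * (2 * ENNReal.ofReal (br (x-y) ^ (-p)))
            + ENNReal.ofReal (br y ^ (-(1/2:ℝ))) * ENNReal.ofReal (br x ^ (-(1+e)))) := by
          apply lintegral_mono; intro x
          simp only
          rw [← ENNReal.ofReal_mul (ker1_nonneg _ _ _ _)]
          refine (ENNReal.ofReal_le_ofReal (ker1_pt' x y)).trans ?_
          rw [ENNReal.ofReal_add (mul_nonneg (nn _ _) (mul_nonneg (by norm_num) (nn _ _)))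
            (mul_nonneg (nn _ _) (nn _ _)), ENNReal.ofReal_mul (nn _ _),
            ENNReal.ofReal_mul (nn _ _), ENNReal.ofReal_mul (by norm_num), ENNReal.ofReal_ofNat]
          gcongr
          · exact br_ge_one y
          · linarith
      _ = ENNReal.ofReal (br y ^ (-(1/2:ℝ))) * (2 * I1) + ENNReal.ofReal (br y ^ (-(1/2:ℝ))) * I3 := by
          have m1 : Measurable fun x => ENNReal.ofReal (br (x-y) ^ (-p)) :=
            (mb (-p)).comp (measurable_id.sub measurable_const)
          rw [lintegral_add_left ((m1.const_mul 2).const_mul _), lintegral_const_mul _ (m1.const_mul 2),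
            lintegral_const_mul _ m1, lintegral_const_mul _ (mb _),
            lintegral_sub_right_eq_self (fun y => ENNReal.ofReal (br y ^ (-p))) y]
      _ ≤ _ := by
        rw [← mul_add, mul_comm]; exact mul_le_mul_left (add_le_add_left le_self_add _) _

lemma lint_prod3 (f g h : ℝ → ENNReal) (hf : Measurable f) (hg : Measurable g) (hh : Measurable h) :
    ∫⁻ z : ℝ × ℝ × ℝ, f z.1 * (g z.2.1 * h z.2.2) = (∫⁻ x, f x) * ((∫⁻ x, g x) * ∫⁻ x, h x) := by
  rw [Measure.volume_eq_prod]
  rw [lintegral_prod_mul (g := fun w : ℝ × ℝ => g w.1 * h w.2) hf.aemeasurable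
    ((hg.comp measurable_fst).mul (hh.comp measurable_snd)).aemeasurable]
  rw [Measure.volume_eq_prod, lintegral_prod_mul hg.aemeasurable hh.aemeasurable]

lemma schur3 (k : ℝ → ℝ → ENNReal) (mk : Measurable (Function.uncurry k)) (v : ℝ → ENNReal)
    (mv : Measurable v) (v0 : ∀ s, v s ≠ 0) (vt : ∀ s, v s ≠ ⊤) (C : ENNReal)
    (h1 : ∀ x, ∫⁻ y, k x y * v y ≤ C * v x) (h2 : ∀ y, ∫⁻ x, k x y * v x ≤ C * v y)
    (f : ℝ × ℝ × ℝ → ENNReal) (hf : Measurable f) :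
    ∫⁻ x : ℝ × ℝ × ℝ, (∫⁻ y : ℝ × ℝ × ℝ,
      (k x.1 y.1 * (k x.2.1 y.2.1 * k x.2.2 y.2.2)) * f y) ^ 2
      ≤ (C*(C*C))^2 * ∫⁻ y, f y ^ 2 := by
  refine schur_test volume (fun x y : ℝ × ℝ × ℝ => k x.1 y.1 * (k x.2.1 y.2.1 * k x.2.2 y.2.2)) ?_
    (fun x => v x.1 * (v x.2.1 * v x.2.2)) ?_ ?_ ?_ (C*(C*C)) ?_ ?_ f hf
  · have a1 : Measurable fun z : (ℝ×ℝ×ℝ)×(ℝ×ℝ×ℝ) => (z.1.1, z.2.1) := by fun_prop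
    have a2 : Measurable fun z : (ℝ×ℝ×ℝ)×(ℝ×ℝ×ℝ) => (z.1.2.1, z.2.2.1) := by fun_prop
    have a3 : Measurable fun z : (ℝ×ℝ×ℝ)×(ℝ×ℝ×ℝ) => (z.1.2.2, z.2.2.2) := by fun_prop
    exact (mk.comp a1).mul ((mk.comp a2).mul (mk.comp a3))
  · exact (mv.comp measurable_fst).mul ((mv.comp measurable_snd.fst).mul (mv.comp measurable_snd.snd))
  · intro x; exact mul_ne_zero (v0 _) (mul_ne_zero (v0 _) (v0 _))
  · intro x; exact ENNReal.mul_ne_top (vt _) (ENNReal.mul_ne_top (vt _) (vt _))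
  · intro x
    have mm : ∀ a : ℝ, Measurable fun y : ℝ => k a y * v y :=
      fun a => (mk.comp (measurable_prodMk_left (x := a))).mul mv
    have := lint_prod3 _ _ _ (mm x.1) (mm x.2.1) (mm x.2.2)
    calc _ = ∫⁻ y : ℝ×ℝ×ℝ, k x.1 y.1 * v y.1 * (k x.2.1 y.2.1 * v y.2.1 * (k x.2.2 y.2.2 * v y.2.2)) := by
          congr 1; ext y; ring
      _ = _ := this
      _ ≤ _ := mul_le_mul' (h1 _) (mul_le_mul' (h1 _) (h1 _))
      _ = _ := by ring
  · intro y
    have mm : ∀ a : ℝ, Measurable fun x : ℝ => k x a * v x :=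
      fun a => (mk.comp (measurable_prodMk_right (y := a))).mul mv
    have := lint_prod3 _ _ _ (mm y.1) (mm y.2.1) (mm y.2.2)
    calc _ = ∫⁻ x : ℝ×ℝ×ℝ, k x.1 y.1 * v x.1 * (k x.2.1 y.2.1 * v x.2.1 * (k x.2.2 y.2.2 * v x.2.2)) := by
          congr 1; ext y; ring
      _ = _ := this
      _ ≤ _ := mul_le_mul' (h2 _) (mul_le_mul' (h2 _) (h2 _))
      _ = _ := by ring

lemma ker3_bound {p e : ℝ} (hp : 2 < p) (he : 0 < e) : ∃ C : ENNReal, C ≠ ⊤ ∧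
    ∀ f : ℝ × ℝ × ℝ → ENNReal, Measurable f →
      ∫⁻ x : ℝ × ℝ × ℝ, (∫⁻ y : ℝ × ℝ × ℝ, (ENNReal.ofReal (ker1 p e x.1 y.1) *
        (ENNReal.ofReal (ker1 p e x.2.1 y.2.1) * ENNReal.ofReal (ker1 p e x.2.2 y.2.2))) * f y) ^ 2
      ≤ C * ∫⁻ y, f y ^ 2 := by
  obtain ⟨C, hC, h1, h2⟩ := ker1_schur hp he
  have vpos : ∀ s, ENNReal.ofReal (br s ^ (-(1/2:ℝ))) ≠ 0 := fun s => by
    have := br_pos s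
    simp only [ne_eq, ENNReal.ofReal_eq_zero, not_le]; positivity
  refine ⟨(C*(C*C))^2, by finiteness, fun f hf => ?_⟩
  exact schur3 (fun x y => ENNReal.ofReal (ker1 p e x y)) (measurable_ker1 p e).ennreal_ofReal
    (fun s => ENNReal.ofReal (br s ^ (-(1/2:ℝ)))) (measurable_br_rpow (-(1/2:ℝ))).ennreal_ofReal
    vpos (fun _ => ENNReal.ofReal_ne_top) C h1 h2 f hf

lemma meas3 (k : ℝ → ℝ → ENNReal) (mk : Measurable (Function.uncurry k))
    (f : ℝ × ℝ × ℝ → ENNReal) (hf : Measurable f) :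
    (Measurable fun x : ℝ × ℝ × ℝ => ∫⁻ y : ℝ × ℝ × ℝ,
      (k x.1 y.1 * (k x.2.1 y.2.1 * k x.2.2 y.2.2)) * f y) ∧
    ∀ x : ℝ × ℝ × ℝ, Measurable fun y : ℝ × ℝ × ℝ =>
      (k x.1 y.1 * (k x.2.1 y.2.1 * k x.2.2 y.2.2)) * f y := by
  have a1 : Measurable fun z : (ℝ×ℝ×ℝ)×(ℝ×ℝ×ℝ) => (z.1.1, z.2.1) := by fun_prop
  have a2 : Measurable fun z : (ℝ×ℝ×ℝ)×(ℝ×ℝ×ℝ) => (z.1.2.1, z.2.2.1) := by fun_prop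
  have a3 : Measurable fun z : (ℝ×ℝ×ℝ)×(ℝ×ℝ×ℝ) => (z.1.2.2, z.2.2.2) := by fun_prop
  have m3 : Measurable fun z : (ℝ×ℝ×ℝ)×(ℝ×ℝ×ℝ) =>
      (k z.1.1 z.2.1 * (k z.1.2.1 z.2.2.1 * k z.1.2.2 z.2.2.2)) * f z.2 :=
    ((mk.comp a1).mul ((mk.comp a2).mul (mk.comp a3))).mul (hf.comp measurable_snd)
  exact ⟨m3.lintegral_prod_right', fun x => m3.comp (measurable_prodMk_left (x := x))⟩

lemma ptw {m p : ℝ} (hp : 2 < p) (hmp : m = -p - 1/2) {a : ℝ → ℂ} (ha : Differentiable ℝ a)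
    {C : ℝ} (hC : 0 < C) (hb0 : ∀ s, ‖a s‖ ≤ C * br s ^ m)
    (hb1 : ∀ s, ‖deriv a s‖ ≤ C * br s ^ (m-1)) {c : ℝ} (hc : 0 < c) (hc1 : c ≤ 1) :
    ∃ A : ℝ, 0 < A ∧ ∀ x y R : ℝ, 1 ≤ R → br x ≤ R → c * R ≤ br x →
      R ^ p * ‖a (x-y)‖ ≤ A * (br y ^ p * br (x-y) ^ m + R ^ (-(1/2:ℝ))) ∧
      R ^ p * ‖a x‖ ≤ A * (br y ^ p * br (x-y) ^ m + R ^ (-(1/2:ℝ))) ∧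
      R ^ p * ‖a (x-y) - a x‖ ≤
        A * (br y ^ p * br (x-y) ^ m + R ^ (-(1/2:ℝ))) * (br y / R) ^ (1/2:ℝ) := by
  obtain ⟨d, hd⟩ : ∃ d, d = c / 2 := ⟨_, rfl⟩
  have hd0 : 0 < d := by linarith
  have hd1 : d ≤ 1 := by linarith
  have dm : d ^ m ≤ d ^ (m-1) := Real.rpow_le_rpow_of_exponent_ge hd0 hd1 (by linarith)
  have dpos : 0 < d ^ m := by positivity
  refine ⟨2 * C * d ^ (m-1), by positivity, ?_⟩
  intro x y R hR hxR hcR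
  have hR0 : 0 < R := by linarith
  have hby := br_pos y
  have hbz := br_pos (x-y)
  obtain ⟨Q, hQ⟩ : ∃ Q, Q = br y ^ p * br (x-y) ^ m + R ^ (-(1/2:ℝ)) := ⟨_, rfl⟩
  have hq1 : R ^ (-(1/2:ℝ)) ≤ Q := by
    rw [hQ]; exact le_add_of_nonneg_left (by positivity)
  have hq2 : br y ^ p * br (x-y) ^ m ≤ Q := by
    rw [hQ]; exact le_add_of_nonneg_right (by positivity)
  have hQ0 : 0 < Q := lt_of_lt_of_le (by positivity) hq1
  rw [← hQ]
  have far : ∀ z, d * R ≤ br z → R ^ p * ‖a z‖ ≤ C * d ^ m * Q := by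
    intro z hz
    have h1 : br z ^ m ≤ (d * R) ^ m :=
      Real.rpow_le_rpow_of_nonpos (by positivity) hz (by linarith)
    calc R ^ p * ‖a z‖ ≤ R ^ p * (C * (d * R) ^ m) := by
          gcongr; exact (hb0 z).trans (by gcongr)
      _ = C * d ^ m * (R ^ p * R ^ m) := by rw [Real.mul_rpow hd0.le hR0.le]; ring
      _ = C * d ^ m * R ^ (-(1/2:ℝ)) := by rw [← Real.rpow_add hR0, hmp]; ring_nf
      _ ≤ _ := by gcongr
  have hxd : d * R ≤ br x := by nlinarith
  have hB := far x hxd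
  have small : ∀ t : ℝ, |x| / 2 ≤ |t| → d * R ≤ br t := fun t ht => by
    have := br_mono_half ht
    rw [hd]; linarith
  have large : |x| / 2 ≤ |y| → R ^ p * ‖a (x-y)‖ ≤ C * d ^ m * Q := by
    intro hy
    have h1 := small y hy
    have h2 : R ^ p ≤ d ^ (-p) * br y ^ p := by
      calc R ^ p ≤ (br y / d) ^ p := by gcongr; rw [le_div_iff₀ hd0]; linarith
        _ = _ := by rw [Real.div_rpow hby.le hd0.le, Real.rpow_neg hd0.le]; ring
    have h3 : d ^ (-p) ≤ d ^ m := Real.rpow_le_rpow_of_exponent_ge hd0 hd1 (by linarith)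
    calc R ^ p * ‖a (x-y)‖ ≤ (d ^ (-p) * br y ^ p) * (C * br (x-y) ^ m) := by
          gcongr; exact hb0 _
      _ ≤ (d ^ m * br y ^ p) * (C * br (x-y) ^ m) := by gcongr
      _ = C * d ^ m * (br y ^ p * br (x-y) ^ m) := by ring
      _ ≤ _ := by gcongr
  have hA : R ^ p * ‖a (x-y)‖ ≤ C * d ^ m * Q := by
    rcases le_total (|x|/2) |y| with h | h
    · exact large h
    · apply far
      apply small
      have := abs_sub_abs_le_abs_sub x y
      linarith
  have hAA : C * d ^ m * Q ≤ 2 * C * d ^ (m-1) * Q := by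
    gcongr; linarith
  refine ⟨hA.trans hAA, hB.trans hAA, ?_⟩
  rcases le_total (|x|/2) |y| with h | h
  · have h1 := small y h
    have h2 : d ^ (1/2:ℝ) ≤ (br y / R) ^ (1/2:ℝ) := by
      gcongr; rw [le_div_iff₀ hR0]; exact h1
    have h3 : d ^ m ≤ d ^ (m-1) * d ^ (1/2:ℝ) := by
      rw [← Real.rpow_add hd0]
      exact Real.rpow_le_rpow_of_exponent_ge hd0 hd1 (by linarith)
    calc R ^ p * ‖a (x-y) - a x‖ ≤ R ^ p * (‖a (x-y)‖ + ‖a x‖) := by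
          gcongr; exact norm_sub_le _ _
      _ ≤ 2 * C * d ^ m * Q := by rw [mul_add]; linarith
      _ ≤ 2 * C * (d ^ (m-1) * (br y / R) ^ (1/2:ℝ)) * Q := by
          gcongr; exact h3.trans (by gcongr)
      _ = _ := by ring
  · have mv : ‖a (x-y) - a x‖ ≤ (C * (d * R) ^ (m-1)) * ‖(x-y) - x‖ := by
      apply (convex_uIcc x (x-y)).norm_image_sub_le_of_norm_deriv_le (𝕜 := ℝ)
        (fun t _ => ha t) _ (Set.left_mem_uIcc) (Set.right_mem_uIcc)
      intro t ht
      refine (hb1 t).trans ?_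
      gcongr ?_ * ?_
      refine Real.rpow_le_rpow_of_nonpos (by positivity) (small t ?_) (by linarith)
      have h5 : |t - x| ≤ |x - y - x| := Set.abs_sub_left_of_mem_uIcc ht
      have h6 : |x - y - x| = |y| := by rw [sub_sub_cancel_left, abs_neg]
      have h7 := abs_sub_abs_le_abs_sub x t
      rw [abs_sub_comm x t] at h7
      linarith
    have h8 : ‖x - y - x‖ = |y| := by rw [sub_sub_cancel_left, norm_neg, Real.norm_eq_abs]
    rw [h8] at mv
    have hyR : |y| ≤ R := by
      have := abs_le_br x
      have := abs_nonneg x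
      linarith
    have h9 : |y| / R ≤ (br y / R) ^ (1/2:ℝ) := by
      calc |y| / R = (|y| / R) ^ (1:ℝ) := by simp
        _ ≤ (|y| / R) ^ (1/2:ℝ) := Real.rpow_le_rpow_of_exponent_ge_of_imp (by positivity)
            (by rw [div_le_one hR0]; exact hyR) (by norm_num) (by norm_num)
        _ ≤ _ := by gcongr; exact abs_le_br y
    calc R ^ p * ‖a (x-y) - a x‖ ≤ R ^ p * (C * (d * R) ^ (m-1) * |y|) := by gcongr
      _ = C * d ^ (m-1) * (R ^ p * R ^ (m-1) * R) * (|y| / R) := by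
          rw [Real.mul_rpow hd0.le hR0.le]; field_simp
      _ = C * d ^ (m-1) * R ^ (-(1/2:ℝ)) * (|y| / R) := by
          have : R ^ p * R ^ (m-1) * R = R ^ (-(1/2:ℝ)) := by
            nth_rewrite 3 [← Real.rpow_one R]
            rw [← Real.rpow_add hR0, ← Real.rpow_add hR0, hmp]; ring_nf
          rw [this]
      _ ≤ C * d ^ (m-1) * Q * (br y / R) ^ (1/2:ℝ) := by gcongr
      _ ≤ 2 * C * d ^ (m-1) * Q * (br y / R) ^ (1/2:ℝ) := by
          gcongr; linarith

lemma Q_le {m p e : ℝ} (hmp : m = -p - 1/2) (he : 0 < e) {x y R : ℝ} (hxR : br x ≤ R) :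
    (br y ^ p * br (x-y) ^ m + R ^ (-(1/2:ℝ))) * R ^ (-e) ≤ br y ^ p * ker1 p e x y := by
  have hx := br_pos x
  have hR0 : 0 < R := hx.trans_le hxR
  have hR : 1 ≤ R := (br_ge_one x).trans hxR
  have hby := br_pos y
  have hbz := br_pos (x-y)
  have h1 : R ^ (-e) ≤ 1 := Real.rpow_le_one_of_one_le_of_nonpos hR (by linarith)
  have h2 : R ^ (-(1/2:ℝ)) * R ^ (-e) ≤ br x ^ (-(1/2) - e) := by
    rw [← Real.rpow_add hR0, ← sub_eq_add_neg]
    exact Real.rpow_le_rpow_of_nonpos hx hxR (by linarith)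
  have h3 : br y ^ p * br y ^ (-p) = 1 := by rw [← Real.rpow_add hby]; simp
  unfold ker1
  rw [← hmp, add_mul, mul_add]
  refine add_le_add (mul_le_of_le_one_right (by positivity) h1) ?_
  calc _ ≤ br x ^ (-(1/2) - e) := h2
    _ = br x ^ (-(1/2) - e) * (br y ^ p * br y ^ (-p)) := by rw [h3, mul_one]
    _ = _ := by ring

lemma tele {P A1 A2 A3 Q1 Q2 Q3 T : ℝ} {u1 u2 u3 v1 v2 v3 : ℂ} (hP : 0 ≤ P)
    (hA2 : 0 ≤ A2) (hA1 : 0 ≤ A1) (hQ1 : 0 ≤ Q1) (hQ2 : 0 ≤ Q2)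
    (hT : 0 ≤ T)
    (a2 : P * ‖u2‖ ≤ A2 * Q2) (a3 : P * ‖u3‖ ≤ A3 * Q3)
    (b1 : P * ‖v1‖ ≤ A1 * Q1) (b2 : P * ‖v2‖ ≤ A2 * Q2)
    (c1 : P * ‖u1 - v1‖ ≤ A1 * Q1 * T) (c2 : P * ‖u2 - v2‖ ≤ A2 * Q2 * T)
    (c3 : P * ‖u3 - v3‖ ≤ A3 * Q3 * T) :
    (P * P * P) * ‖u1 * u2 * u3 - v1 * v2 * v3‖ ≤ 3 * (A1 * A2 * A3) * (Q1 * Q2 * Q3) * T := by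
  have e : u1 * u2 * u3 - v1 * v2 * v3 = (u1 - v1) * u2 * u3 + v1 * (u2 - v2) * u3
      + v1 * v2 * (u3 - v3) := by ring
  calc _ ≤ (P * P * P) * (‖u1 - v1‖ * ‖u2‖ * ‖u3‖ + ‖v1‖ * ‖u2 - v2‖ * ‖u3‖
        + ‖v1‖ * ‖v2‖ * ‖u3 - v3‖) := by
        gcongr
        rw [e]
        refine (norm_add₃_le).trans (le_of_eq ?_)
        simp only [norm_mul]
    _ = (P * ‖u1 - v1‖) * (P * ‖u2‖) * (P * ‖u3‖) + (P * ‖v1‖) * (P * ‖u2 - v2‖) * (P * ‖u3‖)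
        + (P * ‖v1‖) * (P * ‖v2‖) * (P * ‖u3 - v3‖) := by ring
    _ ≤ (A1 * Q1 * T) * (A2 * Q2) * (A3 * Q3) + (A1 * Q1) * (A2 * Q2 * T) * (A3 * Q3)
        + (A1 * Q1) * (A2 * Q2) * (A3 * Q3 * T) := by gcongr
    _ = _ := by ring

/-- the main pointwise kernel bound -/
lemma main_ptw {m p r e : ℝ} (hp : 2 < p) (hmp : m = -p - 1/2) (he : e = (1 - r)/6) (hr : r < 1)
    {α₁ α₂ α₃ : ℝ → ℂ} (hα₁ : IsSymbol m α₁) (hα₂ : IsSymbol m α₂) (hα₃ : IsSymbol m α₃)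
    {μ₀ μ₁ : ℝ} (h0 : 0 < μ₀) (h1 : μ₀ < μ₁) :
    ∃ A : ℝ, 0 < A ∧ ∀ η ∈ Upsilon μ₀ μ₁, ∀ ζ : ℝ × ℝ × ℝ,
      br3 η ^ (3 * p + r/2) * ‖α₁ (η.1 - ζ.1) * α₂ (η.2.1 - ζ.2.1) * α₃ (η.2.2 - ζ.2.2) -
        α₁ η.1 * α₂ η.2.1 * α₃ η.2.2‖ ≤
      A * (ker1 p e η.1 ζ.1 * (ker1 p e η.2.1 ζ.2.1 * ker1 p e η.2.2 ζ.2.2)) *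
        (br ζ.1 ^ p * br ζ.2.1 ^ p * br ζ.2.2 ^ p * br3 ζ ^ (1/2:ℝ)) := by
  obtain ⟨c, hc, hc1, hU⟩ := upsilon_bound h0 h1
  have hm : m < -(5/2:ℝ) := by linarith
  have he0 : 0 < e := by linarith
  obtain ⟨C1, hC1, f1, g1⟩ := sym_bound hm hα₁
  obtain ⟨C2, hC2, f2, g2⟩ := sym_bound hm hα₂
  obtain ⟨C3, hC3, f3, g3⟩ := sym_bound hm hα₃
  obtain ⟨A1, hA1, k1⟩ := ptw hp hmp (hα₁.1.differentiable (by simp)) hC1 f1 g1 hc hc1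
  obtain ⟨A2, hA2, k2⟩ := ptw hp hmp (hα₂.1.differentiable (by simp)) hC2 f2 g2 hc hc1
  obtain ⟨A3, hA3, k3⟩ := ptw hp hmp (hα₃.1.differentiable (by simp)) hC3 f3 g3 hc hc1
  refine ⟨3 * (A1 * A2 * A3), by positivity, ?_⟩
  intro η hη ζ
  obtain ⟨u1, u2, u3⟩ := hU η hη
  have l1 := br_le_br3_1 η
  have l2 := br_le_br3_2 η
  have l3 := br_le_br3_3 η
  have m1 := br_le_br3_1 ζ
  have m2 := br_le_br3_2 ζ
  have m3 := br_le_br3_3 ζ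
  have hR := br3_ge_one η
  have hS := br3_ge_one ζ
  clear hU
  generalize br3 η = R at *
  generalize br3 ζ = S at *
  have hR0 : 0 < R := by linarith
  have hS0 : 0 < S := by linarith
  obtain ⟨a1, b1, c1⟩ := k1 η.1 ζ.1 R hR l1 u1
  obtain ⟨a2, b2, c2⟩ := k2 η.2.1 ζ.2.1 R hR l2 u2
  obtain ⟨a3, b3, c3⟩ := k3 η.2.2 ζ.2.2 R hR l3 u3
  have q1 := Q_le (y := ζ.1) hmp he0 l1
  have q2 := Q_le (y := ζ.2.1) hmp he0 l2
  have q3 := Q_le (y := ζ.2.2) hmp he0 l3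
  have Qn : ∀ x y : ℝ, 0 ≤ br y ^ p * br (x-y) ^ m + R ^ (-(1/2:ℝ)) := fun x y => by
    have := br_pos y
    have := br_pos (x-y)
    positivity
  have n1 := Qn η.1 ζ.1
  have n2 := Qn η.2.1 ζ.2.1
  have n3 := Qn η.2.2 ζ.2.2
  generalize br ζ.1 ^ p * br (η.1 - ζ.1) ^ m + R ^ (-(1/2:ℝ)) = Q1 at *
  generalize br ζ.2.1 ^ p * br (η.2.1 - ζ.2.1) ^ m + R ^ (-(1/2:ℝ)) = Q2 at *
  generalize br ζ.2.2 ^ p * br (η.2.2 - ζ.2.2) ^ m + R ^ (-(1/2:ℝ)) = Q3 at *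
  have tt : ∀ s, br s ≤ S → (br s / R) ^ (1/2:ℝ) ≤ (S / R) ^ (1/2:ℝ) := fun s hs => by
    have := br_pos s
    gcongr
  have key := tele (P := R ^ p) (T := (S/R) ^ (1/2:ℝ)) (by positivity) hA2.le hA1.le n1 n2 (by positivity)
    a2 a3 b1 b2 (c1.trans (mul_le_mul_of_nonneg_left (tt _ m1) (by positivity))) (c2.trans (mul_le_mul_of_nonneg_left (tt _ m2) (by positivity)))
    (c3.trans (mul_le_mul_of_nonneg_left (tt _ m3) (by positivity)))
  have e1 : R ^ (3 * p + r/2) = R ^ (r/2) * (R ^ p * R ^ p * R ^ p) := by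
    rw [← Real.rpow_add hR0, ← Real.rpow_add hR0, ← Real.rpow_add hR0]; ring_nf
  have e2 : R ^ (r/2) * (S/R) ^ (1/2:ℝ) = S ^ (1/2:ℝ) * (R ^ (-e) * R ^ (-e) * R ^ (-e)) := by
    have e3 : (S/R) ^ (1/2:ℝ) = S ^ (1/2:ℝ) * R ^ (-(1/2:ℝ)) := by
      rw [Real.div_rpow hS0.le hR0.le, Real.rpow_neg hR0.le]; rfl
    rw [e3, mul_left_comm, ← Real.rpow_add hR0, ← Real.rpow_add hR0, ← Real.rpow_add hR0, he]; ring_nf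
  have z1 := br_pos ζ.1
  have z2 := br_pos ζ.2.1
  have z3 := br_pos ζ.2.2
  have w1 := ker1_nonneg p e η.1 ζ.1
  have w2 := ker1_nonneg p e η.2.1 ζ.2.1
  have w3 := ker1_nonneg p e η.2.2 ζ.2.2
  rw [e1, mul_assoc]
  calc _ ≤ R ^ (r/2) * (3 * (A1 * A2 * A3) * (Q1 * Q2 * Q3) * (S/R) ^ (1/2:ℝ)) := by gcongr
    _ = 3 * (A1 * A2 * A3) * (Q1 * Q2 * Q3) * (R ^ (r/2) * (S/R) ^ (1/2:ℝ)) := by ring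
    _ = 3 * (A1 * A2 * A3) * S ^ (1/2:ℝ) * ((Q1 * R ^ (-e)) * (Q2 * R ^ (-e)) * (Q3 * R ^ (-e))) := by
        rw [e2]; ring
    _ ≤ 3 * (A1 * A2 * A3) * S ^ (1/2:ℝ) * ((br ζ.1 ^ p * ker1 p e η.1 ζ.1) *
        (br ζ.2.1 ^ p * ker1 p e η.2.1 ζ.2.1) * (br ζ.2.2 ^ p * ker1 p e η.2.2 ζ.2.2)) := by
        gcongr
    _ = _ := by ring

/-- **Lemma 6.2: asymptotic expansion of the convolution of a product-type symbol
with a weighted `L²` function, in elliptic conic regions.** -/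
theorem stmt_6 (m : ℝ) (hm : m < -(5 / 2 : ℝ))
    (α₁ α₂ α₃ : ℝ → ℂ)
    (hα₁ : IsSymbol m α₁) (hα₂ : IsSymbol m α₂) (hα₃ : IsSymbol m α₃)
    (b : ℝ × ℝ × ℝ → ℂ) (hb : Measurable b)
    (hbw : ∀ δ : ℝ, 0 < δ →
      MemLp (fun η : ℝ × ℝ × ℝ =>
        (br η.1 ^ (-m - 1/2) * br η.2.1 ^ (-m - 1/2) * br η.2.2 ^ (-m - 1/2) *
          br3 η ^ (1 - δ)) • b η) 2 volume) :
    Integrable b volume ∧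
    (∀ η : ℝ × ℝ × ℝ,
      Integrable (fun ζ : ℝ × ℝ × ℝ =>
        (α₁ (η.1 - ζ.1) * α₂ (η.2.1 - ζ.2.1) * α₃ (η.2.2 - ζ.2.2)) * b ζ) volume) ∧
    (∀ μ₀ μ₁ r : ℝ, 0 < μ₀ → μ₀ < μ₁ → 0 < r → r + 2 / (-m - 1/2) < 1 →
      ∫⁻ η in Upsilon μ₀ μ₁,
        ENNReal.ofReal (br3 η ^ (-6 * m - 3 + r) *
          ‖(∫ ζ : ℝ × ℝ × ℝ,
              (α₁ (η.1 - ζ.1) * α₂ (η.2.1 - ζ.2.1) * α₃ (η.2.2 - ζ.2.2)) * b ζ ∂volume) -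
            (α₁ η.1 * α₂ η.2.1 * α₃ η.2.2) * ∫ ζ : ℝ × ℝ × ℝ, b ζ ∂volume‖ ^ 2)
        ∂volume < ⊤) := by
  obtain ⟨p, hpe⟩ : ∃ p : ℝ, p = -m - 1/2 := ⟨_, rfl⟩
  have hp : 2 < p := by linarith
  have hmp : m = -p - 1/2 := by linarith
  have hw := hbw (1/2) (by norm_num)
  rw [← hpe] at hw
  have hhalf : (1 - 1/2 : ℝ) = 1/2 := by norm_num
  rw [hhalf] at hw
  -- the weight
  obtain ⟨w, hwd⟩ : ∃ w : ℝ × ℝ × ℝ → ℝ, w = fun η => br η.1 ^ p * br η.2.1 ^ p * br η.2.2 ^ p *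
    br3 η ^ (1/2:ℝ) := ⟨_, rfl⟩
  have hwpos : ∀ η, 0 < w η := fun η => by
    have := br_pos η.1
    have := br_pos η.2.1
    have := br_pos η.2.2
    have := br3_ge_one η
    rw [hwd]; positivity
  have hwm : Measurable w := by
    rw [hwd]
    exact ((((measurable_br_rpow p).comp measurable_fst).mul
      ((measurable_br_rpow p).comp measurable_snd.fst)).mul
      ((measurable_br_rpow p).comp measurable_snd.snd)).mul
      (continuous_br3.measurable.pow_const _)
  have hB : ∫⁻ η, (ENNReal.ofReal (w η) * ‖b η‖ₑ) ^ 2 < ⊤ := by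
    have h := lintegral_rpow_enorm_lt_top_of_eLpNorm_lt_top (by norm_num) (by norm_num) hw.2
    refine lt_of_eq_of_lt ?_ h
    congr 1; ext η
    rw [enorm_smul, Real.enorm_of_nonneg (by have := (hwpos η).le; rw [hwd] at this; exact this), hwd]
    norm_num
  have hBm : Measurable fun η => ENNReal.ofReal (w η) * ‖b η‖ₑ := hwm.ennreal_ofReal.mul hb.enorm
  -- integrability of b
  have hbi : Integrable b volume := by
    refine ⟨hb.aestronglyMeasurable, ?_⟩
    have m1 := (measurable_br_rpow (-(2*p))).ennreal_ofReal
    have f1 := lint_br (q := 2*p) (by linarith)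
    have h3 := lint_prod3 _ _ _ m1 m1 m1
    have hpt : ∀ η, ‖b η‖ₑ ≤ (ENNReal.ofReal (br η.1 ^ (-(2*p))) *
        (ENNReal.ofReal (br η.2.1 ^ (-(2*p))) * ENNReal.ofReal (br η.2.2 ^ (-(2*p)))))
        + (ENNReal.ofReal (w η) * ‖b η‖ₑ) ^ 2 := by
      intro η
      have p1 := br_pos η.1
      have p2 := br_pos η.2.1
      have p3 := br_pos η.2.2
      have hwη := hwpos η
      rw [← ofReal_norm, ← ENNReal.ofReal_mul hwη.le, ← ENNReal.ofReal_pow (by positivity),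
        ← ENNReal.ofReal_mul (by positivity), ← ENNReal.ofReal_mul (by positivity),
        ← ENNReal.ofReal_add (by positivity) (by positivity)]
      apply ENNReal.ofReal_le_ofReal
      obtain ⟨g, hg⟩ : ∃ g, g = br η.1 ^ (-p) * (br η.2.1 ^ (-p) * br η.2.2 ^ (-p)) := ⟨_, rfl⟩
      have sqr : ∀ s : ℝ, br s ^ (-(2*p)) = (br s ^ (-p)) ^ 2 := fun s => by
        rw [← Real.rpow_natCast, ← Real.rpow_mul (br_pos s).le]; push_cast; ring_nf
      have inv : ∀ s : ℝ, br s ^ (-p) * br s ^ p = 1 := fun s => by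
        rw [← Real.rpow_add (br_pos s)]; simp
      have hg2 : br η.1 ^ (-(2*p)) * (br η.2.1 ^ (-(2*p)) * br η.2.2 ^ (-(2*p))) = g ^ 2 := by
        rw [sqr, sqr, sqr, hg]; ring
      rw [hg2]
      have hgw : 1 ≤ g * w η := by
        have e : g * w η = (br η.1 ^ (-p) * br η.1 ^ p) * (br η.2.1 ^ (-p) * br η.2.1 ^ p) *
          (br η.2.2 ^ (-p) * br η.2.2 ^ p) * br3 η ^ (1/2:ℝ) := by rw [hg, hwd]; ring
        rw [e, inv, inv, inv]
        simpa using Real.one_le_rpow (br3_ge_one η) (by norm_num : (0:ℝ) ≤ 1/2)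
      have : ‖b η‖ ≤ g * (w η * ‖b η‖) := by
        rw [← mul_assoc]; exact le_mul_of_one_le_left (norm_nonneg _) hgw
      nlinarith [sq_nonneg (g - w η * ‖b η‖), sq_nonneg g, sq_nonneg (w η * ‖b η‖)]
    refine lt_of_le_of_lt (lintegral_mono hpt) ?_
    rw [lintegral_add_right _ (hBm.pow_const 2), h3]
    have := f1.ne
    have := hB.ne
    finiteness
  have hconv : ∀ η : ℝ × ℝ × ℝ,
      Integrable (fun ζ : ℝ × ℝ × ℝ =>
        (α₁ (η.1 - ζ.1) * α₂ (η.2.1 - ζ.2.1) * α₃ (η.2.2 - ζ.2.2)) * b ζ) volume := by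
    intro η
    have bd : ∀ a : ℝ → ℂ, IsSymbol m a → ∃ C, 0 < C ∧ ∀ s, ‖a s‖ ≤ C := by
      intro a ha
      obtain ⟨C, hC, h, -⟩ := sym_bound hm ha
      refine ⟨C, hC, fun s => (h s).trans (mul_le_of_le_one_right hC.le ?_)⟩
      exact Real.rpow_le_one_of_one_le_of_nonpos (br_ge_one s) (by linarith)
    obtain ⟨C1, hC1, k1⟩ := bd _ hα₁
    obtain ⟨C2, hC2, k2⟩ := bd _ hα₂
    obtain ⟨C3, hC3, k3⟩ := bd _ hα₃
    have c1 := hα₁.1.continuous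
    have c2 := hα₂.1.continuous
    have c3 := hα₃.1.continuous
    refine hbi.bdd_mul (c := C1 * C2 * C3) ?_ ?_
    · apply Continuous.aestronglyMeasurable; fun_prop
    · refine Filter.Eventually.of_forall fun ζ => ?_
      rw [norm_mul, norm_mul]
      have := k1 (η.1 - ζ.1)
      have := k2 (η.2.1 - ζ.2.1)
      have := k3 (η.2.2 - ζ.2.2)
      gcongr
  refine ⟨hbi, hconv, ?_⟩
  intro μ₀ μ₁ r h0 h1 hr0 hr
  have hr1 : r < 1 := by
    have : 0 < 2 / (-m - 1/2) := by rw [← hpe]; positivity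
    linarith
  obtain ⟨e, he⟩ : ∃ e, e = (1 - r)/6 := ⟨_, rfl⟩
  have he0 : 0 < e := by linarith
  obtain ⟨A, hA, key⟩ := main_ptw hp hmp he hr1 hα₁ hα₂ hα₃ h0 h1
  obtain ⟨C, hC, hK⟩ := ker3_bound hp he0
  have hKf := hK _ hBm
  obtain ⟨mG, mKx⟩ := meas3 (fun x y => ENNReal.ofReal (ker1 p e x y))
    (measurable_ker1 p e).ennreal_ofReal _ hBm
  have bound : ∀ η ∈ Upsilon μ₀ μ₁, ENNReal.ofReal (br3 η ^ (-6 * m - 3 + r) *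
          ‖(∫ ζ : ℝ × ℝ × ℝ,
              (α₁ (η.1 - ζ.1) * α₂ (η.2.1 - ζ.2.1) * α₃ (η.2.2 - ζ.2.2)) * b ζ ∂volume) -
            (α₁ η.1 * α₂ η.2.1 * α₃ η.2.2) * ∫ ζ : ℝ × ℝ × ℝ, b ζ ∂volume‖ ^ 2) ≤
      ENNReal.ofReal A ^ 2 * (∫⁻ y : ℝ × ℝ × ℝ, (ENNReal.ofReal (ker1 p e η.1 y.1) *
        (ENNReal.ofReal (ker1 p e η.2.1 y.2.1) * ENNReal.ofReal (ker1 p e η.2.2 y.2.2))) *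
        (ENNReal.ofReal (w y) * ‖b y‖ₑ)) ^ 2 := by
    intro η hη
    have hR0 : 0 < br3 η := lt_of_lt_of_le one_pos (br3_ge_one η)
    rw [← integral_const_mul, ← integral_sub (hconv η) (hbi.const_mul _)]
    have e1 : br3 η ^ (-6 * m - 3 + r) = (br3 η ^ (3 * p + r/2)) ^ 2 := by
      rw [← Real.rpow_natCast, ← Real.rpow_mul hR0.le, hmp]; push_cast; ring_nf
    rw [e1, ← mul_pow, ENNReal.ofReal_pow (by positivity), ENNReal.ofReal_mul (by positivity),
      ofReal_norm, ← mul_pow]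
    refine pow_le_pow_left₀ (zero_le) ?_ 2
    calc _ ≤ ENNReal.ofReal (br3 η ^ (3 * p + r/2)) * ∫⁻ ζ : ℝ × ℝ × ℝ,
          ‖(α₁ (η.1 - ζ.1) * α₂ (η.2.1 - ζ.2.1) * α₃ (η.2.2 - ζ.2.2)) * b ζ -
            (α₁ η.1 * α₂ η.2.1 * α₃ η.2.2) * b ζ‖ₑ := by
          gcongr; exact enorm_integral_le_lintegral_enorm _
      _ = ∫⁻ ζ : ℝ × ℝ × ℝ, ENNReal.ofReal (br3 η ^ (3 * p + r/2)) *
          ‖(α₁ (η.1 - ζ.1) * α₂ (η.2.1 - ζ.2.1) * α₃ (η.2.2 - ζ.2.2)) * b ζ -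
            (α₁ η.1 * α₂ η.2.1 * α₃ η.2.2) * b ζ‖ₑ :=
          (lintegral_const_mul' _ _ ENNReal.ofReal_ne_top).symm
      _ ≤ ∫⁻ y : ℝ × ℝ × ℝ, ENNReal.ofReal A * ((ENNReal.ofReal (ker1 p e η.1 y.1) *
        (ENNReal.ofReal (ker1 p e η.2.1 y.2.1) * ENNReal.ofReal (ker1 p e η.2.2 y.2.2))) *
        (ENNReal.ofReal (w y) * ‖b y‖ₑ)) := by
          refine lintegral_mono fun ζ => ?_
          simp only
          have w1 := ker1_nonneg p e η.1 ζ.1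
          have w2 := ker1_nonneg p e η.2.1 ζ.2.1
          have w3 := ker1_nonneg p e η.2.2 ζ.2.2
          have hk := ENNReal.ofReal_le_ofReal (key η hη ζ)
          have hwζ : br ζ.1 ^ p * br ζ.2.1 ^ p * br ζ.2.2 ^ p * br3 ζ ^ (1/2:ℝ) = w ζ := by rw [hwd]
          rw [hwζ, ENNReal.ofReal_mul (by positivity), ENNReal.ofReal_mul (by positivity),
            ENNReal.ofReal_mul hA.le, ENNReal.ofReal_mul w1, ENNReal.ofReal_mul w2, ofReal_norm] at hk
          rw [← sub_mul, enorm_mul, ← mul_assoc]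
          calc _ ≤ _ * ‖b ζ‖ₑ := mul_le_mul_left hk _
            _ = _ := by ring
      _ = _ := lintegral_const_mul _ (mKx η)
  refine lt_of_le_of_lt (setLIntegral_mono ((mG.pow_const 2).const_mul _) bound) ?_
  refine lt_of_le_of_lt (setLIntegral_le_lintegral _ _) ?_
  rw [lintegral_const_mul _ (mG.pow_const 2)]
  refine ENNReal.mul_lt_top (by finiteness) (lt_of_le_of_lt hKf ?_)
  exact ENNReal.mul_lt_top hC.lt_top hB
end
end

section
/- Let d ≥ 0, n = 3+d, write y = (y₁,y₂,y₃,y'') ∈ ℝ³ × ℝ^d, and let m < −1. For j = 1,2,3 let a_j : ℝ × ℝ^{n−1} → ℂ be a symbol of order m with smooth parameters, and define the bounded continuous functions v₁(y) = ∫_ℝ e^{i y₁ η} a₁(η, (y₂,y₃,y'')) dη, v₂(y) = ∫_ℝ e^{i y₂ η} a₂(η, (y₁,y₃,y'')) dη, v₃(y) = ∫_ℝ e^{i y₃ η} a₃(η, (y₁,y₂,y'')) dη (absolutely convergent since m < −1), and V(y) = ∫_{ℝ³} e^{i(y₁η₁+y₂η₂+y₃η₃)} a₁(η₁,(0,0,y''))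 a₂(η₂,(0,0,y'')) a₃(η₃,(0,0,y'')) dη₁dη₂dη₃. Then for every φ ∈ C_c^∞(ℝⁿ) there are measurable functions e₁, e₂, e₃ on ℝⁿ with 𝓕(φ·(v₁v₂v₃ − V)) = e₁ + e₂ + e₃ such that for every δ > 0: W_{−m+1/2, −m−1/2, −m−1/2, δ}·e₁ ∈ L²(ℝⁿ), W_{−m−1/2, −m+1/2, −m−1/2, δ}·e₂ ∈ L²(ℝⁿ), and W_{−m−1/2, −m−1/2, −m+1/2, δ}·e₃ ∈ L²(ℝⁿ). -/
open MeasureTheory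
open scoped RealInnerProductSpace

noncomputable section

/-- The parameter space `ℝ^{n-1} = ℝ² × ℝᵈ`. -/
abbrev Par (d : ℕ) : Type := ℝ × ℝ × EuclideanSpace ℝ (Fin d)

/-- A symbol of order `m` with smooth parameters: `a(η, w)` is smooth and every
mixed derivative `∂_w^α ∂_η^β a` is bounded by `C (1+|η|)^{m-β}`. -/
def IsSymbolP (d : ℕ) (m : ℝ) (a : ℝ × Par d → ℂ) : Prop :=
  ContDiff ℝ (⊤ : ℕ∞) a ∧ ∀ α β : ℕ, ∃ C : ℝ, ∀ (η : ℝ) (w : Par d),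
    ‖iteratedFDeriv ℝ α (fun w' => iteratedDeriv β (fun η' => a (η', w')) η) w‖ ≤
      C * (1 + |η|) ^ (m - β)

/-- The Euclidean pairing `⟨y, η⟩` on `ℝⁿ = ℝ³ × ℝᵈ`. -/
def pairing (d : ℕ) (y η : Sp d) : ℝ :=
  y.1 * η.1 + y.2.1 * η.2.1 + y.2.2.1 * η.2.2.1 + ⟪y.2.2.2, η.2.2.2⟫

/-- The Fourier transform `𝓕u(η) = ∫ e^{-i⟨y,η⟩} u(y) dy`. -/
def FT (d : ℕ) (u : Sp d → ℂ) (η : Sp d) : ℂ :=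
  ∫ y : Sp d, Complex.exp (-(Complex.I * (pairing d y η : ℂ))) * u y ∂volume

/-- The conormal wave `v₁(y) = ∫ e^{i y₁ η} a(η, (y₂,y₃,y'')) dη`. -/
def v1 (d : ℕ) (a : ℝ × Par d → ℂ) (y : Sp d) : ℂ :=
  ∫ η : ℝ, Complex.exp (Complex.I * ((y.1 * η : ℝ) : ℂ)) * a (η, (y.2.1, y.2.2.1, y.2.2.2))

/-- The conormal wave `v₂(y) = ∫ e^{i y₂ η} a(η, (y₁,y₃,y'')) dη`. -/
def v2 (d : ℕ) (a : ℝ × Par d → ℂ) (y : Sp d) : ℂ :=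
  ∫ η : ℝ, Complex.exp (Complex.I * ((y.2.1 * η : ℝ) : ℂ)) * a (η, (y.1, y.2.2.1, y.2.2.2))

/-- The conormal wave `v₃(y) = ∫ e^{i y₃ η} a(η, (y₁,y₂,y'')) dη`. -/
def v3 (d : ℕ) (a : ℝ × Par d → ℂ) (y : Sp d) : ℂ :=
  ∫ η : ℝ, Complex.exp (Complex.I * ((y.2.2.1 * η : ℝ) : ℂ)) * a (η, (y.1, y.2.1, y.2.2.2))

/-- The product-type conormal distribution
`V(y) = ∫_{ℝ³} e^{i(y₁η₁+y₂η₂+y₃η₃)} a₁(η₁,(0,0,y'')) a₂(η₂,(0,0,y'')) a₃(η₃,(0,0,y'')) dη`. -/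
def Vt (d : ℕ) (a₁ a₂ a₃ : ℝ × Par d → ℂ) (y : Sp d) : ℂ :=
  ∫ η : ℝ × ℝ × ℝ,
    Complex.exp (Complex.I * ((y.1 * η.1 + y.2.1 * η.2.1 + y.2.2.1 * η.2.2 : ℝ) : ℂ)) *
      a₁ (η.1, ((0 : ℝ), (0 : ℝ), y.2.2.2)) * a₂ (η.2.1, ((0 : ℝ), (0 : ℝ), y.2.2.2)) *
      a₃ (η.2.2, ((0 : ℝ), (0 : ℝ), y.2.2.2))

open Set

lemma exists_dir (d : ℕ) (ζ : Sp d) : ∃ v : Sp d, ‖v‖ ≤ 1 ∧ ‖ζ‖ ≤ |pairing d v ζ| := by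
  obtain ⟨a, b, c, z⟩ := ζ
  have hn : ‖((a, b, c, z) : Sp d)‖ = max |a| (max |b| (max |c| ‖z‖)) := rfl
  rcases max_choice |a| (max |b| (max |c| ‖z‖)) with h | h
  · refine ⟨(1, 0, 0, 0), by simp [Prod.norm_def], ?_⟩
    rw [hn, h]; simp [pairing]
  rcases max_choice |b| (max |c| ‖z‖) with h2 | h2
  · refine ⟨(0, 1, 0, 0), by simp [Prod.norm_def], ?_⟩
    rw [hn, h, h2]; simp [pairing]
  rcases max_choice |c| ‖z‖ with h3 | h3
  · refine ⟨(0, 0, 1, 0), by simp [Prod.norm_def], ?_⟩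
    rw [hn, h, h2, h3]; simp [pairing]
  by_cases hz : ‖z‖ = 0
  · refine ⟨0, by simp, ?_⟩
    rw [hn, h, h2, h3, hz]; positivity
  · refine ⟨(0, 0, 0, ‖z‖⁻¹ • z), by simp [Prod.norm_def, norm_smul, hz], ?_⟩
    rw [hn, h, h2, h3]
    simp only [pairing, inner_smul_left, real_inner_self_eq_norm_sq]
    simp
    field_simp
    exact le_rfl

/-- The pairing as a continuous bilinear map, normalised for Mathlib's Fourier transform. -/
def pairL (d : ℕ) : Sp d →L[ℝ] Sp d →L[ℝ] ℝ :=
  (LinearMap.mk₂ ℝ (fun y η : Sp d => (2 * Real.pi)⁻¹ * pairing d y η)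
    (by intros; simp [pairing, inner_add_left]; ring)
    (by intros; simp [pairing, inner_smul_left]; ring)
    (by intros; simp [pairing, inner_add_right]; ring)
    (by intros; simp [pairing, inner_smul_right]; ring)).toContinuousBilinearMap

lemma pairL_apply (d : ℕ) (y η : Sp d) : pairL d y η = (2 * Real.pi)⁻¹ * pairing d y η := rfl

lemma FT_eq (d : ℕ) (f : Sp d → ℂ) : FT d f =
    VectorFourier.fourierIntegral Real.fourierChar volume (pairL d).toLinearMap₁₂ f := by
  funext η
  simp only [FT, VectorFourier.fourierIntegral]
  congr 1
  funext y
  rw [Circle.smul_def, Real.fourierChar_apply, smul_eq_mul]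
  congr 2
  have h0 : ((pairL d).toLinearMap₁₂ y) η = (2 * Real.pi)⁻¹ * pairing d y η := rfl
  rw [h0]
  push_cast
  have : (Real.pi : ℂ) ≠ 0 := by exact_mod_cast Real.pi_ne_zero
  field_simp

lemma FT_continuous (d : ℕ) (f : Sp d → ℂ) (hf : Integrable f) : Continuous (FT d f) := by
  rw [FT_eq]
  apply VectorFourier.fourierIntegral_continuous Real.continuous_fourierChar _ hf
  change Continuous fun p : Sp d × Sp d => pairL d p.1 p.2
  fun_prop

instance haarSp (d : ℕ) : (volume : Measure (Sp d)).IsAddHaarMeasure := by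
  have h1 : (volume : Measure (ℝ × EuclideanSpace ℝ (Fin d))).IsAddHaarMeasure :=
    Measure.prod.instIsAddHaarMeasure _ _
  have h2 : (volume : Measure (ℝ × ℝ × EuclideanSpace ℝ (Fin d))).IsAddHaarMeasure :=
    Measure.prod.instIsAddHaarMeasure _ _
  exact Measure.prod.instIsAddHaarMeasure _ _

lemma FT_decay (d : ℕ) (K : Set (Sp d)) (hK : IsCompact K) (n : ℕ) :
    ∃ C : ℝ, 0 ≤ C ∧ ∀ (f : Sp d → ℂ) (B : ℝ), ContDiff ℝ (⊤ : ℕ∞) f → tsupport f ⊆ K →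
      (∀ k ≤ n, ∀ y, ‖iteratedFDeriv ℝ k f y‖ ≤ B) →
      ∀ ζ, (1 + ‖ζ‖) ^ n * ‖FT d f ζ‖ ≤ C * B := by
  set vK : ℝ := volume.real K with hvK
  have hvK0 : 0 ≤ vK := measureReal_nonneg
  refine ⟨2 ^ n * (vK + (2 * Real.pi) ^ n * (2 ^ n * ((n + 1 : ℕ) * vK))), by positivity, ?_⟩
  intro f B hf hsupp hB ζ
  have hcs : HasCompactSupport f := hK.of_isClosed_subset (isClosed_tsupport f) hsupp
  have hcont : ∀ k : ℕ, Continuous (iteratedFDeriv ℝ k f) := fun k =>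
    hf.continuous_iteratedFDeriv (by exact_mod_cast le_top)
  have hcsk : ∀ k : ℕ, HasCompactSupport (iteratedFDeriv ℝ k f) := fun k => hcs.iteratedFDeriv k
  have hB0 : 0 ≤ B := (norm_nonneg _).trans (hB 0 (Nat.zero_le _) 0)
  have h_intg : ∀ k ≤ n, ∫ v, ‖iteratedFDeriv ℝ k f v‖ ≤ vK * B := by
    intro k hk
    have h1 : ∫ v, ‖iteratedFDeriv ℝ k f v‖ = ∫ v in K, ‖iteratedFDeriv ℝ k f v‖ := by
      symm
      apply setIntegral_eq_integral_of_forall_compl_eq_zero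
      intro x hx
      have : x ∉ tsupport (iteratedFDeriv ℝ k f) := fun h =>
        hx (hsupp (tsupport_iteratedFDeriv_subset k h))
      rw [image_eq_zero_of_notMem_tsupport this, norm_zero]
    rw [h1]
    have h2 := norm_setIntegral_le_of_norm_le_const (μ := volume) (s := K)
      (f := fun v => ‖iteratedFDeriv ℝ k f v‖) (C := B) hK.measure_lt_top
      (fun x _ => by simpa using hB k hk x)
    calc _ ≤ _ := le_abs_self _
      _ ≤ _ := h2
      _ = vK * B := by rw [mul_comm]
  have hmain : ∀ v : Sp d, ∀ N ≤ n, |pairL d v ζ| ^ N * ‖FT d f ζ‖ ≤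
      ‖v‖ ^ N * (2 ^ N * ((N + 1 : ℕ) * (vK * B))) := by
    intro v N hN
    have h := VectorFourier.pow_mul_norm_iteratedFDeriv_fourierIntegral_le (pairL d)
      (μ := (volume : Measure (Sp d))) (K := 0) (N := (⊤ : ℕ∞)) hf (f := f) (k := 0) (n := N)
      (by
        intro k m _ _
        apply Continuous.integrable_of_hasCompactSupport
        · exact (continuous_norm.pow k).mul (hcont m).norm
        · exact (hcsk m).norm.mul_left) le_rfl le_top v ζ
    rw [← FT_eq, norm_iteratedFDeriv_zero] at h
    refine h.trans ?_
    simp only [pow_zero, mul_one, zero_add, CharP.cast_eq_zero, mul_zero]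
    rw [mul_assoc]
    gcongr
    rw [Finset.sum_product]
    simp only [Finset.range_one, Finset.sum_singleton, pow_zero, one_mul]
    calc _ ≤ ∑ i ∈ Finset.range (N + 1), vK * B := Finset.sum_le_sum (fun i hi =>
          h_intg i (by have := Finset.mem_range.1 hi; omega))
      _ = _ := by simp
  have h0 : ‖FT d f ζ‖ ≤ vK * B := by simpa using hmain 0 0 (Nat.zero_le _)
  have hn : ‖ζ‖ ^ n * ‖FT d f ζ‖ ≤
      (2 * Real.pi) ^ n * (2 ^ n * ((n + 1 : ℕ) * (vK * B))) := by
    obtain ⟨v, hv, hvp⟩ := exists_dir d ζ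
    have h := hmain v n le_rfl
    have h3 : ‖v‖ ^ n * (2 ^ n * ((n + 1 : ℕ) * (vK * B))) ≤
        1 * (2 ^ n * ((n + 1 : ℕ) * (vK * B))) := by
      gcongr
      exact pow_le_one₀ (norm_nonneg _) hv
    rw [one_mul] at h3
    have hpi := Real.pi_pos
    calc ‖ζ‖ ^ n * ‖FT d f ζ‖ ≤ |pairing d v ζ| ^ n * ‖FT d f ζ‖ := by gcongr
      _ = (2 * Real.pi) ^ n * (|pairL d v ζ| ^ n * ‖FT d f ζ‖) := by
        rw [pairL_apply, abs_mul, abs_of_pos (a := (2 * Real.pi)⁻¹) (by positivity)]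
        rw [← mul_assoc, ← mul_pow]
        congr 2
        field_simp
      _ ≤ _ := by exact mul_le_mul_of_nonneg_left (h.trans h3) (by positivity)
  have h4 : (1 + ‖ζ‖) ^ n ≤ 2 ^ n * (1 + ‖ζ‖ ^ n) := by
    have := add_pow_le (zero_le_one (α := ℝ)) (norm_nonneg ζ) n
    rw [one_pow] at this
    refine this.trans ?_
    gcongr
    · norm_num
    · omega
  calc (1 + ‖ζ‖) ^ n * ‖FT d f ζ‖ ≤ 2 ^ n * (1 + ‖ζ‖ ^ n) * ‖FT d f ζ‖ := by gcongr
    _ = 2 ^ n * (‖FT d f ζ‖ + ‖ζ‖ ^ n * ‖FT d f ζ‖) := by ring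
    _ ≤ 2 ^ n * (vK * B + (2 * Real.pi) ^ n * (2 ^ n * ((n + 1 : ℕ) * (vK * B)))) := by gcongr
    _ = _ := by ring



/-- Families of smooth functions with uniform bounds on all derivatives. -/
def UB {ι : Type} (d : ℕ) (f : ι → Sp d → ℂ) (g : ι → ℝ) : Prop :=
  (∀ i, ContDiff ℝ (⊤ : ℕ∞) (f i)) ∧
    ∀ k : ℕ, ∃ C : ℝ, 0 ≤ C ∧ ∀ i y, ‖iteratedFDeriv ℝ k (f i) y‖ ≤ C * g i

lemma UB.mul {ι : Type} {d : ℕ} {f f' : ι → Sp d → ℂ} {g g' : ι → ℝ} (h : UB d f g)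
    (h' : UB d f' g') (hg : ∀ i, 0 ≤ g i) (hg' : ∀ i, 0 ≤ g' i) :
    UB d (fun i y => f i y * f' i y) (fun i => g i * g' i) := by
  refine ⟨fun i => (h.1 i).mul (h'.1 i), fun k => ?_⟩
  choose C hC0 hC using h.2
  choose C' hC0' hC' using h'.2
  refine ⟨∑ j ∈ Finset.range (k + 1), (k.choose j : ℝ) * C j * C' (k - j),
    Finset.sum_nonneg (fun j _ => by have := hC0 j; have := hC0' (k - j); positivity), ?_⟩
  intro i y
  refine (norm_iteratedFDeriv_mul_le (h.1 i) (h'.1 i) y (n := k)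
    (by exact_mod_cast le_top)).trans ?_
  rw [Finset.sum_mul]
  apply Finset.sum_le_sum
  intro j _
  have h1 := hC j i y
  have h2 := hC' (k - j) i y
  have := hC0 j
  have := hg i
  calc _ ≤ (k.choose j : ℝ) * (C j * g i) * (C' (k - j) * g' i) := by gcongr
    _ = _ := by ring

lemma UB.const {ι : Type} {d : ℕ} {φ : Sp d → ℂ} (hφ : ContDiff ℝ (⊤ : ℕ∞) φ)
    (hφc : HasCompactSupport φ) : UB (ι := ι) d (fun _ => φ) (fun _ => 1) := by
  refine ⟨fun _ => hφ, fun k => ?_⟩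
  obtain ⟨C, hC⟩ := (hφ.continuous_iteratedFDeriv (m := k)
    (by exact_mod_cast le_top)).bounded_above_of_compact_support (hφc.iteratedFDeriv k)
  exact ⟨C, (norm_nonneg _).trans (hC 0), fun _ y => by simpa using hC y⟩

/-- Amplitudes of order `M`, depending on a parameter in `[0,1]`. -/
structure Amp (d : ℕ) (M : ℝ) (b : unitInterval → ℝ → Sp d → ℂ) : Prop where
  cont : Continuous (fun p : unitInterval × ℝ × Sp d => b p.1 p.2.1 p.2.2)
  smooth : ∀ t η, ContDiff ℝ (⊤ : ℕ∞) (b t η)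
  bd : ∀ k : ℕ, ∃ C : ℝ, 0 ≤ C ∧ ∀ t η y, ‖iteratedFDeriv ℝ k (b t η) y‖ ≤ C * (1 + |η|) ^ M

/-- One-dimensional oscillatory integral. -/
def wav (x : ℝ) (b : ℝ → ℂ) : ℂ := ∫ η : ℝ, Complex.exp (Complex.I * ((x * η : ℝ) : ℂ)) * b η

/-- Pointwise product-type decay. -/
def Dec (d : ℕ) (m₁ m₂ m₃ : ℝ) (e : Sp d → ℂ) : Prop :=
  Continuous e ∧ ∀ N : ℕ, ∃ C : ℝ, 0 ≤ C ∧ ∀ ξ : Sp d, ‖e ξ‖ ≤ C * ((1 + |ξ.1|) ^ m₁ *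
    (1 + |ξ.2.1|) ^ m₂ * (1 + |ξ.2.2.1|) ^ m₃ * (1 + ‖ξ.2.2.2‖) ^ (-(N : ℝ)))

lemma Dec.add {d : ℕ} {m₁ m₂ m₃ : ℝ} {e e' : Sp d → ℂ} (h : Dec d m₁ m₂ m₃ e)
    (h' : Dec d m₁ m₂ m₃ e') : Dec d m₁ m₂ m₃ (fun ξ => e ξ + e' ξ) := by
  refine ⟨h.1.add h'.1, fun N => ?_⟩
  obtain ⟨C, hC0, hC⟩ := h.2 N
  obtain ⟨C', hC0', hC'⟩ := h'.2 N
  refine ⟨C + C', by positivity, fun ξ => ?_⟩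
  rw [add_mul]
  exact (norm_add_le _ _).trans (add_le_add (hC ξ) (hC' ξ))

lemma norm_exp_I (x : ℝ) : ‖Complex.exp (Complex.I * (x : ℂ))‖ = 1 := by
  rw [mul_comm]; exact Complex.norm_exp_ofReal_mul_I x

lemma peetre_s7 (m a b : ℝ) (hm : m ≤ 0) :
    (1 + |b|) ^ m ≤ (1 + |a|) ^ m * (1 + |a - b|) ^ (-m) := by
  have h1 : 1 + |a| ≤ (1 + |b|) * (1 + |a - b|) := by
    have : |a| ≤ |b| + |a - b| := by
      calc |a| = |b + (a - b)| := by ring_nf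
        _ ≤ _ := abs_add_le _ _
    nlinarith [abs_nonneg b, abs_nonneg (a - b)]
  have h2 : ((1 + |b|) * (1 + |a - b|)) ^ m ≤ (1 + |a|) ^ m :=
    Real.rpow_le_rpow_of_nonpos (by positivity) h1 hm
  rw [Real.mul_rpow (by positivity) (by positivity)] at h2
  calc (1 + |b|) ^ m = ((1 + |b|) ^ m * (1 + |a - b|) ^ m) * (1 + |a - b|) ^ (-m) := by
        rw [mul_assoc, ← Real.rpow_add (by positivity)]; simp
    _ ≤ _ := by gcongr

lemma integrable_pow1 (m : ℝ) (hm : m < -1) : Integrable (fun x : ℝ => (1 + |x|) ^ m) := by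
  have := integrable_one_add_norm (E := ℝ) (μ := volume) (r := -m) (by simp; linarith)
  simpa using this

/-- The shift `(θ, 0)`. -/
def shift (d : ℕ) (p : unitInterval × ℝ × ℝ × ℝ) : Sp d := (p.2.1, p.2.2.1, p.2.2.2, 0)

lemma weight_ineq (d : ℕ) (m₁ m₂ m₃ : ℝ) (h₁ : m₁ ≤ 0) (h₂ : m₂ ≤ 0) (h₃ : m₃ ≤ 0) (N n : ℕ)
    (hn : 6 + N - m₁ - m₂ - m₃ ≤ n) (p : unitInterval × ℝ × ℝ × ℝ) (ξ : Sp d) :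
    (1 + |p.2.1|) ^ m₁ * (1 + |p.2.2.1|) ^ m₂ * (1 + |p.2.2.2|) ^ m₃ ≤
      ((1 + |ξ.1|) ^ m₁ *
    (1 + |ξ.2.1|) ^ m₂ * (1 + |ξ.2.2.1|) ^ m₃ * (1 + ‖ξ.2.2.2‖) ^ (-(N : ℝ))) *
     (1 * ((1 + |ξ.1 - p.2.1|) ^ (-2 : ℝ) * ((1 + |ξ.2.1 - p.2.2.1|) ^ (-2 : ℝ) *
      (1 + |ξ.2.2.1 - p.2.2.2|) ^ (-2 : ℝ)))) * (1 + ‖ξ - shift d p‖) ^ n := by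
  obtain ⟨t, a, b, c⟩ := p
  obtain ⟨x, y, z, w⟩ := ξ
  simp only [shift]
  have hnorm : ‖((x, y, z, w) : Sp d) - (a, b, c, 0)‖ =
    max |x - a| (max |y - b| (max |z - c| ‖w - 0‖)) := rfl
  set S := ‖((x, y, z, w) : Sp d) - (a, b, c, 0)‖ with hS
  have hS0 : 0 ≤ S := norm_nonneg _
  have ha : |x - a| ≤ S := by rw [hnorm]; simp
  have hb : |y - b| ≤ S := by rw [hnorm]; simp
  have hc : |z - c| ≤ S := by rw [hnorm]; simp
  have hw : ‖w‖ ≤ S := by rw [hnorm]; simp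
  have key : ∀ (m u v : ℝ), m ≤ 0 → |u - v| ≤ S →
      (1 + |v|) ^ m ≤ (1 + |u|) ^ m * ((1 + |u - v|) ^ (-2 : ℝ) * (1 + S) ^ (2 - m)) := by
    intro m u v hm huv
    refine (peetre_s7 m u v hm).trans ?_
    gcongr
    calc (1 + |u - v|) ^ (-m) = (1 + |u - v|) ^ (-2 : ℝ) * (1 + |u - v|) ^ (2 - m) := by
          rw [← Real.rpow_add (by positivity)]; congr 1; ring
      _ ≤ _ := by gcongr; linarith
  have hw2 : 1 ≤ (1 + ‖w‖) ^ (-(N : ℝ)) * (1 + S) ^ (N : ℝ) := by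
    calc 1 = (1 + ‖w‖) ^ (-(N : ℝ)) * (1 + ‖w‖) ^ (N : ℝ) := by
          rw [← Real.rpow_add (by positivity)]; simp
      _ ≤ _ := by gcongr
  have k1 := key m₁ x a h₁ ha
  have k2 := key m₂ y b h₂ hb
  have k3 := key m₃ z c h₃ hc
  have hpow : (1 + S) ^ (2 - m₁) * (1 + S) ^ (2 - m₂) * (1 + S) ^ (2 - m₃) * (1 + S) ^ (N : ℝ)
      ≤ (1 + S) ^ n := by
    rw [← Real.rpow_add (by positivity), ← Real.rpow_add (by positivity),
      ← Real.rpow_add (by positivity), ← Real.rpow_natCast]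
    apply Real.rpow_le_rpow_of_exponent_le (by linarith)
    linarith
  calc (1 + |a|) ^ m₁ * (1 + |b|) ^ m₂ * (1 + |c|) ^ m₃
      = (1 + |a|) ^ m₁ * (1 + |b|) ^ m₂ * (1 + |c|) ^ m₃ * 1 := by ring
    _ ≤ ((1 + |x|) ^ m₁ * ((1 + |x - a|) ^ (-2 : ℝ) * (1 + S) ^ (2 - m₁))) *
        ((1 + |y|) ^ m₂ * ((1 + |y - b|) ^ (-2 : ℝ) * (1 + S) ^ (2 - m₂))) *
        ((1 + |z|) ^ m₃ * ((1 + |z - c|) ^ (-2 : ℝ) * (1 + S) ^ (2 - m₃))) *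
        ((1 + ‖w‖) ^ (-(N : ℝ)) * (1 + S) ^ (N : ℝ)) := by gcongr
    _ = ((1 + |x|) ^ m₁ * (1 + |y|) ^ m₂ * (1 + |z|) ^ m₃ * (1 + ‖w‖) ^ (-(N : ℝ))) *
        (1 * ((1 + |x - a|) ^ (-2 : ℝ) * ((1 + |y - b|) ^ (-2 : ℝ) *
        (1 + |z - c|) ^ (-2 : ℝ)))) *
        ((1 + S) ^ (2 - m₁) * (1 + S) ^ (2 - m₂) * (1 + S) ^ (2 - m₃) * (1 + S) ^ (N : ℝ)) := by
          ring
    _ ≤ _ := by gcongr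

lemma weight_integral (x y z : ℝ) :
    Integrable (fun p : unitInterval × ℝ × ℝ × ℝ =>
      (1 : ℝ) * ((1 + |x - p.2.1|) ^ (-2 : ℝ) * ((1 + |y - p.2.2.1|) ^ (-2 : ℝ) *
      (1 + |z - p.2.2.2|) ^ (-2 : ℝ)))) ∧
    ∫ p : unitInterval × ℝ × ℝ × ℝ,
      (1 : ℝ) * ((1 + |x - p.2.1|) ^ (-2 : ℝ) * ((1 + |y - p.2.2.1|) ^ (-2 : ℝ) *
      (1 + |z - p.2.2.2|) ^ (-2 : ℝ))) = (∫ x : ℝ, (1 + |x|) ^ (-2 : ℝ)) ^ 3 := by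
  have hI : ∀ x : ℝ, Integrable (fun a : ℝ => (1 + |x - a|) ^ (-2 : ℝ)) := fun x =>
    (integrable_pow1 (-2) (by norm_num)).comp_sub_left x
  have hJ : ∀ x : ℝ, ∫ a : ℝ, (1 + |x - a|) ^ (-2 : ℝ) = ∫ a : ℝ, (1 + |a|) ^ (-2 : ℝ) :=
    fun x => integral_sub_left_eq_self (fun a : ℝ => (1 + |a|) ^ (-2 : ℝ)) volume x
  constructor
  · exact Integrable.mul_prod (integrable_const (μ := (volume : Measure unitInterval)) (1 : ℝ))
      ((hI x).mul_prod ((hI y).mul_prod (hI z)))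
  · have h1 := integral_prod_mul (μ := (volume : Measure unitInterval))
      (ν := (volume : Measure (ℝ × ℝ × ℝ))) (fun _ => (1 : ℝ))
      (fun q => (1 + |x - q.1|) ^ (-2 : ℝ) * ((1 + |y - q.2.1|) ^ (-2 : ℝ) *
      (1 + |z - q.2.2|) ^ (-2 : ℝ)))
    have h2 := integral_prod_mul (μ := (volume : Measure ℝ))
      (ν := (volume : Measure (ℝ × ℝ))) (fun a => (1 + |x - a|) ^ (-2 : ℝ))
      (fun q => (1 + |y - q.1|) ^ (-2 : ℝ) * (1 + |z - q.2|) ^ (-2 : ℝ))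
    have h3 := integral_prod_mul (μ := (volume : Measure ℝ))
      (ν := (volume : Measure ℝ)) (fun a => (1 + |y - a|) ^ (-2 : ℝ))
      (fun q => (1 + |z - q|) ^ (-2 : ℝ))
    refine h1.trans ?_
    erw [h2, h3]
    rw [hJ, hJ, hJ]
    simp
    ring

lemma amp_integrable (m₁ m₂ m₃ : ℝ) (h₁ : m₁ < -1) (h₂ : m₂ < -1) (h₃ : m₃ < -1) :
    Integrable (fun p : unitInterval × ℝ × ℝ × ℝ =>
      (1 + |p.2.1|) ^ m₁ * (1 + |p.2.2.1|) ^ m₂ * (1 + |p.2.2.2|) ^ m₃) := by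
  have := Integrable.mul_prod
    (integrable_const (μ := (volume : Measure unitInterval)) (1 : ℝ))
      ((integrable_pow1 m₁ h₁).mul_prod ((integrable_pow1 m₂ h₂).mul_prod
      (integrable_pow1 m₃ h₃)))
  refine this.congr (ae_of_all _ fun p => ?_)
  simp only
  ring



/-- The triple product of oscillatory integrals, averaged over the parameter. -/
def RR (d : ℕ) (b₁ b₂ b₃ : unitInterval → ℝ → Sp d → ℂ) (y : Sp d) : ℂ :=
  ∫ t : unitInterval, wav y.1 (fun η => b₁ t η y) * wav y.2.1 (fun η => b₂ t η y) *
    wav y.2.2.1 (fun η => b₃ t η y)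

/-- The three-dimensional phase. -/
def phase (d : ℕ) (p : unitInterval × ℝ × ℝ × ℝ) (y : Sp d) : ℂ :=
  Complex.exp (Complex.I * ((y.1 * p.2.1 + y.2.1 * p.2.2.1 + y.2.2.1 * p.2.2.2 : ℝ) : ℂ))

lemma norm_phase (d : ℕ) (p : unitInterval × ℝ × ℝ × ℝ) (y : Sp d) : ‖phase d p y‖ = 1 :=
  norm_exp_I _

lemma triple_wav (x y z : ℝ) (f g h : ℝ → ℂ) :
    wav x f * wav y g * wav z h = ∫ θ : ℝ × ℝ × ℝ,
      Complex.exp (Complex.I * ((x * θ.1 + y * θ.2.1 + z * θ.2.2 : ℝ) : ℂ)) *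
        f θ.1 * g θ.2.1 * h θ.2.2 := by
  have h2 := integral_prod_mul (μ := (volume : Measure ℝ))
      (ν := (volume : Measure (ℝ × ℝ)))
      (fun a => Complex.exp (Complex.I * ((x * a : ℝ) : ℂ)) * f a)
      (fun q => (Complex.exp (Complex.I * ((y * q.1 : ℝ) : ℂ)) * g q.1) *
        (Complex.exp (Complex.I * ((z * q.2 : ℝ) : ℂ)) * h q.2))
  have h3 := integral_prod_mul (μ := (volume : Measure ℝ))
      (ν := (volume : Measure ℝ)) (fun a => Complex.exp (Complex.I * ((y * a : ℝ) : ℂ)) * g a)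
      (fun q => Complex.exp (Complex.I * ((z * q : ℝ) : ℂ)) * h q)
  unfold wav
  rw [mul_assoc, ← h3]
  refine h2.symm.trans ?_
  refine integral_congr_ae (ae_of_all _ fun θ => ?_)
  simp only
  push_cast
  rw [mul_add, mul_add, Complex.exp_add, Complex.exp_add]
  ring

section key
variable {d : ℕ} {m₁ m₂ m₃ : ℝ} {b₁ b₂ b₃ : unitInterval → ℝ → Sp d → ℂ} {φ : Sp d → ℂ}

/-- The full amplitude. -/
def cc (d : ℕ) (b₁ b₂ b₃ : unitInterval → ℝ → Sp d → ℂ) (φ : Sp d → ℂ)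
    (p : unitInterval × ℝ × ℝ × ℝ) (y : Sp d) : ℂ :=
  φ y * (b₁ p.1 p.2.1 y * b₂ p.1 p.2.2.1 y * b₃ p.1 p.2.2.2 y)

/-- The size of the amplitude. -/
def PP (m₁ m₂ m₃ : ℝ) (p : unitInterval × ℝ × ℝ × ℝ) : ℝ :=
  (1 + |p.2.1|) ^ m₁ * (1 + |p.2.2.1|) ^ m₂ * (1 + |p.2.2.2|) ^ m₃

lemma PP_nonneg (p : unitInterval × ℝ × ℝ × ℝ) : 0 ≤ PP m₁ m₂ m₃ p := by
  unfold PP; positivity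

lemma ub_triple (hb₁ : Amp d m₁ b₁) (hb₂ : Amp d m₂ b₂) (hb₃ : Amp d m₃ b₃) :
    UB d (fun (p : unitInterval × ℝ × ℝ × ℝ) y =>
      b₁ p.1 p.2.1 y * b₂ p.1 p.2.2.1 y * b₃ p.1 p.2.2.2 y) (PP m₁ m₂ m₃) := by
  have u1 : UB d (fun (p : unitInterval × ℝ × ℝ × ℝ) => b₁ p.1 p.2.1)
      (fun p => (1 + |p.2.1|) ^ m₁) := ⟨fun p => hb₁.smooth _ _, fun k => by
    obtain ⟨C, h0, h⟩ := hb₁.bd k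
    exact ⟨C, h0, fun p y => h _ _ _⟩⟩
  have u2 : UB d (fun (p : unitInterval × ℝ × ℝ × ℝ) => b₂ p.1 p.2.2.1)
      (fun p => (1 + |p.2.2.1|) ^ m₂) := ⟨fun p => hb₂.smooth _ _, fun k => by
    obtain ⟨C, h0, h⟩ := hb₂.bd k
    exact ⟨C, h0, fun p y => h _ _ _⟩⟩
  have u3 : UB d (fun (p : unitInterval × ℝ × ℝ × ℝ) => b₃ p.1 p.2.2.2)
      (fun p => (1 + |p.2.2.2|) ^ m₃) := ⟨fun p => hb₃.smooth _ _, fun k => by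
    obtain ⟨C, h0, h⟩ := hb₃.bd k
    exact ⟨C, h0, fun p y => h _ _ _⟩⟩
  exact (u1.mul u2 (fun _ => by positivity) (fun _ => by positivity)).mul u3
    (fun _ => by positivity) (fun _ => by positivity)

lemma cont_triple (hb₁ : Amp d m₁ b₁) (hb₂ : Amp d m₂ b₂) (hb₃ : Amp d m₃ b₃) :
    Continuous (fun q : Sp d × (unitInterval × ℝ × ℝ × ℝ) => phase d q.2 q.1 *
      (b₁ q.2.1 q.2.2.1 q.1 * b₂ q.2.1 q.2.2.2.1 q.1 * b₃ q.2.1 q.2.2.2.2 q.1)) := by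
  have c1 : Continuous (fun q : Sp d × (unitInterval × ℝ × ℝ × ℝ) => b₁ q.2.1 q.2.2.1 q.1) :=
    hb₁.cont.comp (g := fun p : unitInterval × ℝ × Sp d => b₁ p.1 p.2.1 p.2.2)
      (f := fun q : Sp d × (unitInterval × ℝ × ℝ × ℝ) => (q.2.1, q.2.2.1, q.1)) (by fun_prop)
  have c2 : Continuous (fun q : Sp d × (unitInterval × ℝ × ℝ × ℝ) => b₂ q.2.1 q.2.2.2.1 q.1) :=
    hb₂.cont.comp (g := fun p : unitInterval × ℝ × Sp d => b₂ p.1 p.2.1 p.2.2)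
      (f := fun q : Sp d × (unitInterval × ℝ × ℝ × ℝ) => (q.2.1, q.2.2.2.1, q.1)) (by fun_prop)
  have c3 : Continuous (fun q : Sp d × (unitInterval × ℝ × ℝ × ℝ) => b₃ q.2.1 q.2.2.2.2 q.1) :=
    hb₃.cont.comp (g := fun p : unitInterval × ℝ × Sp d => b₃ p.1 p.2.1 p.2.2)
      (f := fun q : Sp d × (unitInterval × ℝ × ℝ × ℝ) => (q.2.1, q.2.2.2.2, q.1)) (by fun_prop)
  have c0 : Continuous (fun q : Sp d × (unitInterval × ℝ × ℝ × ℝ) => phase d q.2 q.1) := by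
    unfold phase
    fun_prop
  exact c0.mul ((c1.mul c2).mul c3)

lemma RR_eq (hb₁ : Amp d m₁ b₁) (hb₂ : Amp d m₂ b₂) (hb₃ : Amp d m₃ b₃)
    (h₁ : m₁ < -1) (h₂ : m₂ < -1) (h₃ : m₃ < -1) (y : Sp d) :
    RR d b₁ b₂ b₃ y = ∫ p : unitInterval × ℝ × ℝ × ℝ, phase d p y *
      (b₁ p.1 p.2.1 y * b₂ p.1 p.2.2.1 y * b₃ p.1 p.2.2.2 y) := by
  obtain ⟨C, hC0, hC⟩ := (ub_triple hb₁ hb₂ hb₃).2 0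
  have h_intg : Integrable (fun p : unitInterval × ℝ × ℝ × ℝ => phase d p y *
      (b₁ p.1 p.2.1 y * b₂ p.1 p.2.2.1 y * b₃ p.1 p.2.2.2 y))
      ((volume : Measure unitInterval).prod (volume : Measure (ℝ × ℝ × ℝ))) := by
    refine Integrable.mono' ((amp_integrable m₁ m₂ m₃ h₁ h₂ h₃).const_mul C) ?_ ?_
    · exact ((cont_triple hb₁ hb₂ hb₃).comp (by fun_prop :
        Continuous (fun p : unitInterval × ℝ × ℝ × ℝ => (y, p)))).aestronglyMeasurable
    · refine ae_of_all _ fun p => ?_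
      rw [norm_mul, norm_phase, one_mul]
      simpa [PP] using hC p y
  refine Eq.trans ?_ (integral_prod _ h_intg).symm
  unfold RR
  refine integral_congr_ae (ae_of_all _ fun t => ?_)
  simp only
  rw [triple_wav]
  refine integral_congr_ae (ae_of_all _ fun θ => ?_)
  simp only [phase]
  ring

lemma joint_int (hb₁ : Amp d m₁ b₁) (hb₂ : Amp d m₂ b₂) (hb₃ : Amp d m₃ b₃)
    (h₁ : m₁ < -1) (h₂ : m₂ < -1) (h₃ : m₃ < -1)
    (hφ : ContDiff ℝ (⊤ : ℕ∞) φ) (hφc : HasCompactSupport φ)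
    (u : Sp d → ℂ) (hu : Continuous u) (hu1 : ∀ y, ‖u y‖ ≤ 1) :
    Integrable (fun q : Sp d × (unitInterval × ℝ × ℝ × ℝ) =>
      u q.1 * (phase d q.2 q.1 * cc d b₁ b₂ b₃ φ q.2 q.1))
      ((volume : Measure (Sp d)).prod (volume : Measure (unitInterval × ℝ × ℝ × ℝ))) := by
  obtain ⟨C, hC0, hC⟩ := (ub_triple hb₁ hb₂ hb₃).2 0
  have hφi : Integrable φ := hφ.continuous.integrable_of_hasCompactSupport hφc
  refine Integrable.mono' (hφi.norm.mul_prod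
    ((amp_integrable m₁ m₂ m₃ h₁ h₂ h₃).const_mul C)) ?_ ?_
  · have : Continuous (fun q : Sp d × (unitInterval × ℝ × ℝ × ℝ) =>
      u q.1 * (phase d q.2 q.1 * cc d b₁ b₂ b₃ φ q.2 q.1)) := by
      have h1 := (hu.comp continuous_fst).mul (((hφ.continuous.comp continuous_fst).mul
        (cont_triple hb₁ hb₂ hb₃)))
      refine h1.congr fun q => ?_
      simp only [cc, Pi.mul_apply, Function.comp]
      ring
    exact this.aestronglyMeasurable
  · refine ae_of_all _ fun q => ?_
    rw [norm_mul, norm_mul, norm_phase, one_mul, cc, norm_mul]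
    have h4 := hC q.2 q.1
    rw [norm_iteratedFDeriv_zero] at h4
    calc _ ≤ 1 * (‖φ q.1‖ * (C * PP m₁ m₂ m₃ q.2)) := by
          gcongr
          exact hu1 _
      _ = _ := by rw [one_mul, PP]

lemma phiRR_eq (hb₁ : Amp d m₁ b₁) (hb₂ : Amp d m₂ b₂) (hb₃ : Amp d m₃ b₃)
    (h₁ : m₁ < -1) (h₂ : m₂ < -1) (h₃ : m₃ < -1) (y : Sp d) :
    φ y * RR d b₁ b₂ b₃ y = ∫ p : unitInterval × ℝ × ℝ × ℝ,
      phase d p y * cc d b₁ b₂ b₃ φ p y := by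
  rw [RR_eq hb₁ hb₂ hb₃ h₁ h₂ h₃, ← integral_const_mul]
  refine integral_congr_ae (ae_of_all _ fun p => ?_)
  simp only [cc]
  ring

lemma phiRR_int (hb₁ : Amp d m₁ b₁) (hb₂ : Amp d m₂ b₂) (hb₃ : Amp d m₃ b₃)
    (h₁ : m₁ < -1) (h₂ : m₂ < -1) (h₃ : m₃ < -1)
    (hφ : ContDiff ℝ (⊤ : ℕ∞) φ) (hφc : HasCompactSupport φ) :
    Integrable (fun y => φ y * RR d b₁ b₂ b₃ y) := by
  have h := (joint_int hb₁ hb₂ hb₃ h₁ h₂ h₃ hφ hφc (fun _ => 1) continuous_const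
    (by simp)).integral_prod_left
  refine h.congr (ae_of_all _ fun y => ?_)
  simp only [one_mul]
  exact (phiRR_eq hb₁ hb₂ hb₃ h₁ h₂ h₃ y).symm

lemma FT_phiRR (hb₁ : Amp d m₁ b₁) (hb₂ : Amp d m₂ b₂) (hb₃ : Amp d m₃ b₃)
    (h₁ : m₁ < -1) (h₂ : m₂ < -1) (h₃ : m₃ < -1)
    (hφ : ContDiff ℝ (⊤ : ℕ∞) φ) (hφc : HasCompactSupport φ) (ξ : Sp d) :
    FT d (fun y => φ y * RR d b₁ b₂ b₃ y) ξ = ∫ p : unitInterval × ℝ × ℝ × ℝ,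
      FT d (cc d b₁ b₂ b₃ φ p) (ξ - shift d p) := by
  set u : Sp d → ℂ := fun y => Complex.exp (-(Complex.I * (pairing d y ξ : ℂ))) with hu
  have hcu : Continuous u := by
    rw [hu]; unfold pairing; fun_prop
  have hu1 : ∀ y, ‖u y‖ ≤ 1 := by
    intro y
    have := norm_exp_I (-pairing d y ξ)
    rw [hu]
    simp only
    rw [← this]
    apply le_of_eq
    congr 2
    push_cast
    ring
  have h := joint_int hb₁ hb₂ hb₃ h₁ h₂ h₃ hφ hφc u hcu hu1
  have hsw := integral_integral_swap (f := fun (y : Sp d) (p : unitInterval × ℝ × ℝ × ℝ) =>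
    u y * (phase d p y * cc d b₁ b₂ b₃ φ p y)) h
  have e1 : FT d (fun y => φ y * RR d b₁ b₂ b₃ y) ξ = ∫ y, ∫ p : unitInterval × ℝ × ℝ × ℝ,
      u y * (phase d p y * cc d b₁ b₂ b₃ φ p y) := by
    unfold FT
    refine integral_congr_ae (ae_of_all _ fun y => ?_)
    simp only
    rw [phiRR_eq hb₁ hb₂ hb₃ h₁ h₂ h₃, ← integral_const_mul]
  rw [e1, hsw]
  refine integral_congr_ae (ae_of_all _ fun p => ?_)
  simp only [FT]
  refine integral_congr_ae (ae_of_all _ fun y => ?_)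
  simp only [hu, phase]
  rw [← mul_assoc, ← Complex.exp_add]
  congr 2
  simp only [pairing, shift, Prod.fst_sub, Prod.snd_sub, sub_zero]
  push_cast
  ring

theorem key_dec (hb₁ : Amp d m₁ b₁) (hb₂ : Amp d m₂ b₂) (hb₃ : Amp d m₃ b₃)
    (h₁ : m₁ < -1) (h₂ : m₂ < -1) (h₃ : m₃ < -1)
    (hφ : ContDiff ℝ (⊤ : ℕ∞) φ) (hφc : HasCompactSupport φ) :
    Dec d m₁ m₂ m₃ (FT d (fun y => φ y * RR d b₁ b₂ b₃ y)) := by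
  refine ⟨FT_continuous d _ (phiRR_int hb₁ hb₂ hb₃ h₁ h₂ h₃ hφ hφc), fun N => ?_⟩
  obtain ⟨n, hn⟩ := exists_nat_ge (6 + N - m₁ - m₂ - m₃)
  obtain ⟨C, hC0, hC⟩ := FT_decay d (tsupport φ) hφc n
  have hub : UB d (cc d b₁ b₂ b₃ φ) (fun p => 1 * PP m₁ m₂ m₃ p) :=
    (UB.const hφ hφc).mul (ub_triple hb₁ hb₂ hb₃) (fun _ => zero_le_one) PP_nonneg
  choose D hD0 hD using hub.2
  set B : ℝ := ∑ k ∈ Finset.range (n + 1), D k with hB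
  have hB0 : 0 ≤ B := Finset.sum_nonneg fun k _ => hD0 k
  have hbound : ∀ p ζ, (1 + ‖ζ‖) ^ n * ‖FT d (cc d b₁ b₂ b₃ φ p) ζ‖ ≤
      C * (B * PP m₁ m₂ m₃ p) := by
    intro p ζ
    apply hC _ _ (hub.1 p)
    · exact closure_mono (fun y hy => by
        simp only [cc, Function.mem_support] at hy ⊢
        exact left_ne_zero_of_mul hy)
    · intro k hk y
      refine (hD k p y).trans ?_
      simp only [one_mul]
      have := PP_nonneg (m₁ := m₁) (m₂ := m₂) (m₃ := m₃) p
      gcongr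
      exact Finset.single_le_sum (f := D) (fun k _ => hD0 k) (Finset.mem_range.2 (by omega))
  set J : ℝ := (∫ x : ℝ, (1 + |x|) ^ (-2 : ℝ)) ^ 3 with hJ
  have hJ0 : 0 ≤ J := pow_nonneg (integral_nonneg fun x => by positivity) 3
  refine ⟨C * B * J, by positivity, fun ξ => ?_⟩
  rw [FT_phiRR hb₁ hb₂ hb₃ h₁ h₂ h₃ hφ hφc]
  obtain ⟨hI1, hI2⟩ := weight_integral ξ.1 ξ.2.1 ξ.2.2.1
  set Q : ℝ := ((1 + |ξ.1|) ^ m₁ *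
    (1 + |ξ.2.1|) ^ m₂ * (1 + |ξ.2.2.1|) ^ m₃ * (1 + ‖ξ.2.2.2‖) ^ (-(N : ℝ))) with hQ
  refine (norm_integral_le_of_norm_le (hI1.const_mul (C * B * Q)) (ae_of_all _ fun p => ?_)).trans
    (le_of_eq ?_)
  · have hw := weight_ineq d m₁ m₂ m₃ (by linarith) (by linarith) (by linarith) N n hn p ξ
    have hb := hbound p (ξ - shift d p)
    set T := (1 + ‖ξ - shift d p‖) ^ n with hT
    have hT0 : 0 < T := by positivity
    rw [← hQ] at hw
    have h5 : T * ‖FT d (cc d b₁ b₂ b₃ φ p) (ξ - shift d p)‖ ≤ T * (C * B * Q *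
      (1 * ((1 + |ξ.1 - p.2.1|) ^ (-2 : ℝ) * ((1 + |ξ.2.1 - p.2.2.1|) ^ (-2 : ℝ) *
      (1 + |ξ.2.2.1 - p.2.2.2|) ^ (-2 : ℝ))))) := by
      refine hb.trans ?_
      calc C * (B * PP m₁ m₂ m₃ p) ≤ C * (B * _) :=
            mul_le_mul_of_nonneg_left (mul_le_mul_of_nonneg_left hw hB0) hC0
        _ = _ := by ring
    exact le_of_mul_le_mul_left h5 hT0
  · rw [integral_const_mul, hI2]
    ring

end key


lemma bracket_le (k x w : ℝ) (hk : 0 ≤ k) (hw : 0 ≤ w) :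
    (1 + x ^ 2 + w ^ 2) ^ (k / 2) ≤ (1 + |x|) ^ k * (1 + w) ^ k := by
  have h1 : 1 + x ^ 2 + w ^ 2 ≤ ((1 + |x|) * (1 + w)) ^ (2 : ℝ) := by
    rw [Real.rpow_two, mul_pow, ← sq_abs x]
    have := abs_nonneg x
    nlinarith [mul_nonneg this hw, mul_nonneg (mul_nonneg this hw) (mul_nonneg this hw),
      mul_nonneg this (mul_nonneg hw hw), mul_nonneg this (mul_nonneg this hw)]
  calc _ ≤ (((1 + |x|) * (1 + w)) ^ (2 : ℝ)) ^ (k / 2) := by gcongr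
    _ = ((1 + |x|) * (1 + w)) ^ k := by
      rw [← Real.rpow_mul (by positivity)]; congr 1; ring
    _ = _ := Real.mul_rpow (by positivity) (by positivity)

lemma bracket_neg (δ x q : ℝ) (hδ : 0 < δ) (hq : 1 + x ^ 2 ≤ q) :
    q ^ (-δ / 6) ≤ 2 ^ (δ / 6) * (1 + |x|) ^ (-δ / 3) := by
  have hq0 : 0 < q := by nlinarith [sq_nonneg x]
  have h1 : (1 + |x|) ^ (2 : ℝ) ≤ 2 * q := by
    rw [Real.rpow_two]
    have := sq_abs x
    nlinarith [sq_nonneg (1 - |x|)]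
  have h2 : (2 * q) ^ (-δ / 6) ≤ ((1 + |x|) ^ (2 : ℝ)) ^ (-δ / 6) :=
    Real.rpow_le_rpow_of_nonpos (by positivity) h1 (by linarith)
  rw [← Real.rpow_mul (by positivity), Real.mul_rpow (by norm_num) hq0.le] at h2
  calc q ^ (-δ / 6) = 2 ^ (δ / 6) * (2 ^ (-δ / 6) * q ^ (-δ / 6)) := by
        rw [← mul_assoc, ← Real.rpow_add (by norm_num)]
        have : δ / 6 + -δ / 6 = 0 := by ring
        rw [this]; simp
    _ ≤ 2 ^ (δ / 6) * (1 + |x|) ^ (2 * (-δ / 6)) := by gcongr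
    _ = _ := by congr 2; ring

lemma sq_rpow (x s : ℝ) (hx : 0 ≤ x) : (x ^ s) ^ 2 = x ^ (2 * s) := by
  rw [← Real.rpow_two, ← Real.rpow_mul hx]; congr 1; ring

lemma Dec.memLp {d : ℕ} {m₁ m₂ m₃ k₁ k₂ k₃ δ : ℝ} {e : Sp d → ℂ} (h : Dec d m₁ m₂ m₃ e)
    (e₁ : k₁ = -m₁ - 1 / 2) (e₂ : k₂ = -m₂ - 1 / 2) (e₃ : k₃ = -m₃ - 1 / 2)
    (h₁ : 0 ≤ k₁) (h₂ : 0 ≤ k₂) (h₃ : 0 ≤ k₃) (hδ : 0 < δ) :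
    MemLp (fun η => W d k₁ k₂ k₃ δ η • e η) 2 volume := by
  obtain ⟨N, hN⟩ := exists_nat_ge (k₁ + k₂ + k₃ + d + 1)
  obtain ⟨C, hC0, hC⟩ := h.2 N
  set s : ℝ := -1 / 2 - δ / 3 with hs
  set q : ℝ := -(d : ℝ) - 1 with hq
  set g : Sp d → ℝ := fun η => (1 + |η.1|) ^ s * ((1 + |η.2.1|) ^ s * ((1 + |η.2.2.1|) ^ s *
    (1 + ‖η.2.2.2‖) ^ q)) with hg
  have hpos : ∀ x : ℝ, 1 + |x| ≠ 0 := fun x => by positivity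
  have hgc : Continuous g := by
    have hc : ∀ x : EuclideanSpace ℝ (Fin d), 1 + ‖x‖ ≠ 0 := fun x => by positivity
    rw [hg]
    refine Continuous.mul ?_ (Continuous.mul ?_ (Continuous.mul ?_ ?_))
    · exact Continuous.rpow_const (by fun_prop) (fun η => Or.inl (hpos _))
    · exact Continuous.rpow_const (by fun_prop) (fun η => Or.inl (hpos _))
    · exact Continuous.rpow_const (by fun_prop) (fun η => Or.inl (hpos _))
    · exact Continuous.rpow_const (by fun_prop) (fun η => Or.inl (hc _))
  have hg2 : MemLp g 2 volume := by
    rw [memLp_two_iff_integrable_sq hgc.aestronglyMeasurable]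
    have i1 := integrable_pow1 (2 * s) (by rw [hs]; linarith)
    have i2 : Integrable (fun w : EuclideanSpace ℝ (Fin d) => (1 + ‖w‖) ^ (2 * q)) := by
      have := integrable_one_add_norm (E := EuclideanSpace ℝ (Fin d)) (μ := volume)
        (r := -(2 * q)) (by
          rw [finrank_euclideanSpace_fin, hq]
          have : (0 : ℝ) ≤ d := Nat.cast_nonneg d
          linarith)
      simpa only [neg_neg] using this
    refine (i1.mul_prod (i1.mul_prod (i1.mul_prod i2))).congr (ae_of_all _ fun η => ?_)
    simp only [hg, mul_pow]
    rw [sq_rpow _ _ (by positivity), sq_rpow _ _ (by positivity), sq_rpow _ _ (by positivity),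
      sq_rpow _ _ (by positivity)]
  have hWc : Continuous (W d k₁ k₂ k₃ δ) := by
    unfold W
    refine Continuous.mul (Continuous.mul (Continuous.mul ?_ ?_) ?_) ?_
    all_goals exact Continuous.rpow_const (by fun_prop) (fun η => Or.inl (by positivity))
  refine MemLp.of_le_mul (c := (2 ^ (δ / 6)) ^ 3 * C) hg2
    (hWc.smul h.1).aestronglyMeasurable (ae_of_all _ fun η => ?_)
  have hWn : 0 ≤ W d k₁ k₂ k₃ δ η := by unfold W; positivity
  have hgn : 0 ≤ g η := by rw [hg]; positivity
  rw [norm_smul, Real.norm_of_nonneg hWn, Real.norm_of_nonneg hgn]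
  obtain ⟨x, y, z, w⟩ := η
  have hCe := hC (x, y, z, w)
  simp only [W, hg] at hCe ⊢
  set ω := ‖w‖ with hω
  have hω0 : 0 ≤ ω := norm_nonneg _
  set Q := 1 + x ^ 2 + y ^ 2 + z ^ 2 + ω ^ 2 with hQ
  have hQ0 : 0 < Q := by positivity
  have q1 := bracket_neg δ x Q hδ (by rw [hQ]; nlinarith [sq_nonneg y, sq_nonneg z, sq_nonneg ω])
  have q2 := bracket_neg δ y Q hδ (by rw [hQ]; nlinarith [sq_nonneg x, sq_nonneg z, sq_nonneg ω])
  have q3 := bracket_neg δ z Q hδ (by rw [hQ]; nlinarith [sq_nonneg y, sq_nonneg x, sq_nonneg ω])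
  have hQs : Q ^ (-δ / 2) = Q ^ (-δ / 6) * Q ^ (-δ / 6) * Q ^ (-δ / 6) := by
    rw [← Real.rpow_add hQ0, ← Real.rpow_add hQ0]; congr 1; ring
  have comb : ∀ (m k u : ℝ), k = -m - 1 / 2 →
      (1 + |u|) ^ k * (1 + |u|) ^ (-δ / 3) * (1 + |u|) ^ m = (1 + |u|) ^ s := by
    intro m k u hk
    rw [← Real.rpow_add (by positivity), ← Real.rpow_add (by positivity)]
    congr 1; rw [hk, hs]; ring
  have hom : (1 + ω) ^ k₁ * (1 + ω) ^ k₂ * (1 + ω) ^ k₃ * (1 + ω) ^ (-(N : ℝ)) ≤ (1 + ω) ^ q := by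
    rw [← Real.rpow_add (by positivity), ← Real.rpow_add (by positivity),
      ← Real.rpow_add (by positivity)]
    apply Real.rpow_le_rpow_of_exponent_le (by linarith)
    rw [hq]; linarith
  calc _ ≤ ((1 + |x|) ^ k₁ * (1 + ω) ^ k₁) * ((1 + |y|) ^ k₂ * (1 + ω) ^ k₂) *
        ((1 + |z|) ^ k₃ * (1 + ω) ^ k₃) * ((2 ^ (δ / 6) * (1 + |x|) ^ (-δ / 3)) *
        (2 ^ (δ / 6) * (1 + |y|) ^ (-δ / 3)) * (2 ^ (δ / 6) * (1 + |z|) ^ (-δ / 3))) *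
        (C * ((1 + |x|) ^ m₁ * (1 + |y|) ^ m₂ * (1 + |z|) ^ m₃ * (1 + ω) ^ (-(N : ℝ)))) := by
        rw [hQs]
        have b1 := bracket_le k₁ x ω h₁ hω0
        have b2 := bracket_le k₂ y ω h₂ hω0
        have b3 := bracket_le k₃ z ω h₃ hω0
        gcongr
    _ = (2 ^ (δ / 6)) ^ 3 * C * (((1 + |x|) ^ k₁ * (1 + |x|) ^ (-δ / 3) * (1 + |x|) ^ m₁) *
        (((1 + |y|) ^ k₂ * (1 + |y|) ^ (-δ / 3) * (1 + |y|) ^ m₂) *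
        (((1 + |z|) ^ k₃ * (1 + |z|) ^ (-δ / 3) * (1 + |z|) ^ m₃) *
        ((1 + ω) ^ k₁ * (1 + ω) ^ k₂ * (1 + ω) ^ k₃ * (1 + ω) ^ (-(N : ℝ)))))) := by ring
    _ ≤ _ := by
      rw [comb _ _ _ e₁, comb _ _ _ e₂, comb _ _ _ e₃]
      gcongr


/-- Symbols of order `M`, only parameter derivatives being controlled. -/
structure WS (d : ℕ) (M : ℝ) (b : ℝ → Par d → ℂ) : Prop where
  cont : Continuous (fun p : ℝ × Par d => b p.1 p.2)
  smooth : ∀ η, ContDiff ℝ (⊤ : ℕ∞) (b η)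
  bd : ∀ k : ℕ, ∃ C : ℝ, 0 ≤ C ∧ ∀ η w, ‖iteratedFDeriv ℝ k (b η) w‖ ≤ C * (1 + |η|) ^ M

lemma WS.amp {d : ℕ} {M : ℝ} {b : ℝ → Par d → ℂ} (hb : WS d M b)
    (L : unitInterval → Sp d →L[ℝ] Par d) (hL : ∀ t, ‖L t‖ ≤ 1)
    (hLc : Continuous (fun p : unitInterval × Sp d => L p.1 p.2)) :
    Amp d M (fun t η y => b η (L t y)) := by
  refine ⟨?_, fun t η => (hb.smooth η).comp (L t).contDiff, fun k => ?_⟩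
  · exact hb.cont.comp (g := fun p : ℝ × Par d => b p.1 p.2)
      (f := fun p : unitInterval × ℝ × Sp d => (p.2.1, L p.1 p.2.2))
      (Continuous.prodMk (by fun_prop) (hLc.comp (by fun_prop :
        Continuous (fun p : unitInterval × ℝ × Sp d => (p.1, p.2.2)))))
  · obtain ⟨C, hC0, hC⟩ := hb.bd k
    refine ⟨C, hC0, fun t η y => ?_⟩
    have h := (L t).iteratedFDeriv_comp_right (hb.smooth η) y (i := k) (by exact_mod_cast le_top)
    change ‖iteratedFDeriv ℝ k (b η ∘ L t) y‖ ≤ _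
    rw [h]
    refine (ContinuousMultilinearMap.norm_compContinuousLinearMap_le _ _).trans ?_
    refine le_trans ?_ (hC η (L t y))
    apply mul_le_of_le_one_right (norm_nonneg _)
    apply Finset.prod_le_one
    · intros; positivity
    · intros; exact hL t

section sym
variable {d : ℕ} {m : ℝ} {a : ℝ × Par d → ℂ}

lemma IsSymbolP.bd0 (ha : IsSymbolP d m a) (α β : ℕ) : ∃ C : ℝ, 0 ≤ C ∧ ∀ (η : ℝ) (w : Par d),
    ‖iteratedFDeriv ℝ α (fun w' => iteratedDeriv β (fun η' => a (η', w')) η) w‖ ≤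
      C * (1 + |η|) ^ (m - β) := by
  obtain ⟨C, hC⟩ := ha.2 α β
  refine ⟨|C|, abs_nonneg _, fun η w => (hC η w).trans ?_⟩
  gcongr
  exact le_abs_self C

lemma IsSymbolP.ws0 (ha : IsSymbolP d m a) : WS d m (fun η w => a (η, w)) := by
  refine ⟨ha.1.continuous, fun η => ha.1.comp (by fun_prop), fun k => ?_⟩
  obtain ⟨C, h0, h⟩ := ha.bd0 k 0
  refine ⟨C, h0, fun η w => ?_⟩
  simpa using h η w

lemma IsSymbolP.hasDerivAt (ha : IsSymbolP d m a) (η : ℝ) (w : Par d) :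
    HasDerivAt (fun η' => a (η', w)) (fderiv ℝ a (η, w) (1, 0)) η := by
  have h1 : HasFDerivAt a (fderiv ℝ a (η, w)) (η, w) :=
    (ha.1.differentiable (by simp) _).hasFDerivAt
  have h2 : HasDerivAt (fun η' : ℝ => ((η', w) : ℝ × Par d)) ((1 : ℝ), (0 : Par d)) η :=
    (hasDerivAt_id η).prodMk (hasDerivAt_const η w)
  exact h1.comp_hasDerivAt η h2

lemma IsSymbolP.fderiv_w (ha : IsSymbolP d m a) (η : ℝ) (w v : Par d) :
    fderiv ℝ (fun w' => a (η, w')) w v = fderiv ℝ a (η, w) (0, v) := by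
  have h1 : HasFDerivAt a (fderiv ℝ a (η, w)) (η, w) :=
    (ha.1.differentiable (by simp) _).hasFDerivAt
  have h2 : HasFDerivAt (fun w' : Par d => ((η, w') : ℝ × Par d))
      ((0 : Par d →L[ℝ] ℝ).prod (ContinuousLinearMap.id ℝ (Par d))) w :=
    (hasFDerivAt_const η w).prodMk (hasFDerivAt_id w)
  have h3 := (h1.comp w h2).fderiv
  change fderiv ℝ (a ∘ fun w' => (η, w')) w v = _
  rw [h3]
  simp

lemma IsSymbolP.smooth_fd (ha : IsSymbolP d m a) (u : ℝ × Par d) :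
    ContDiff ℝ (⊤ : ℕ∞) (fun p => fderiv ℝ a p u) :=
  (ha.1.fderiv_right (m := (⊤ : ℕ∞)) (by simp)).clm_apply contDiff_const

lemma IsSymbolP.ws1 (ha : IsSymbolP d m a) :
    WS d (m - 1) (fun η w => Complex.I • fderiv ℝ a (η, w) (1, 0)) := by
  have hs := ha.smooth_fd (1, 0)
  have hsw : ∀ η : ℝ, ContDiff ℝ (⊤ : ℕ∞) (fun w : Par d => fderiv ℝ a (η, w) (1, 0)) :=
    fun η => hs.comp (by fun_prop : ContDiff ℝ (⊤ : ℕ∞) (fun w : Par d => (η, w)))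
  refine ⟨(hs.continuous.const_smul Complex.I), fun η => (hsw η).const_smul _, fun k => ?_⟩
  obtain ⟨C, h0, h⟩ := ha.bd0 k 1
  refine ⟨C, h0, fun η w => ?_⟩
  have h1 := h η w
  simp only [iteratedDeriv_one, (ha.hasDerivAt _ _).deriv, Nat.cast_one] at h1
  have h2 := iteratedFDeriv_const_smul_apply' (𝕜 := ℝ) (i := k) (a := Complex.I) (x := w)
    (f := fun w : Par d => fderiv ℝ a (η, w) (1, 0))
    ((hsw η).contDiffAt.of_le (by exact_mod_cast le_top))
  rw [h2, norm_smul, Complex.norm_I, one_mul]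
  exact h1

lemma IsSymbolP.ws2 (ha : IsSymbolP d m a) (v : Par d) (hv : ‖v‖ ≤ 1) :
    WS d m (fun η w => fderiv ℝ a (η, w) (0, v)) := by
  have hs := ha.smooth_fd (0, v)
  refine ⟨hs.continuous, fun η => hs.comp
    (by fun_prop : ContDiff ℝ (⊤ : ℕ∞) (fun w : Par d => (η, w))), fun k => ?_⟩
  obtain ⟨C, h0, h⟩ := ha.bd0 (k + 1) 0
  refine ⟨C, h0, fun η w => ?_⟩
  have h1 := h η w
  simp only [iteratedDeriv_zero, Nat.cast_zero, sub_zero] at h1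
  rw [← norm_iteratedFDeriv_fderiv] at h1
  simp only [← ha.fderiv_w]
  have hsm : ContDiff ℝ (⊤ : ℕ∞) (fun w' : Par d => a (η, w')) := ha.1.comp (by fun_prop)
  have h2 := norm_iteratedFDeriv_clm_apply_const (𝕜 := ℝ) (c := v) (x := w) (n := k)
    (N := (⊤ : ℕ∞)) (f := fderiv ℝ (fun w' : Par d => a (η, w')))
    (hsm.fderiv_right (m := (⊤ : ℕ∞)) (by simp)).contDiffAt (by exact_mod_cast le_top)
  refine h2.trans ?_
  exact (mul_le_of_le_one_left (norm_nonneg _) hv).trans h1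

lemma WS.integrable {M : ℝ} {b : ℝ → Par d → ℂ} (hb : WS d M b) (hM : M < -1) (w : Par d) :
    Integrable (fun η => b η w) := by
  obtain ⟨C, h0, h⟩ := hb.bd 0
  refine ((integrable_pow1 M hM).const_mul C).mono' ?_ (ae_of_all _ fun η => ?_)
  · exact (hb.cont.comp (by fun_prop : Continuous (fun η : ℝ => (η, w)))).aestronglyMeasurable
  · simpa using h η w

lemma integrable_exp_mul (x : ℝ) {f : ℝ → ℂ} (hf : Integrable f) :
    Integrable (fun η : ℝ => Complex.exp (Complex.I * ((x * η : ℝ) : ℂ)) * f η) := by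
  refine hf.norm.mono' ?_ (ae_of_all _ fun η => ?_)
  · exact (Continuous.aestronglyMeasurable (by fun_prop)).mul hf.1
  · rw [norm_mul, norm_exp_I, one_mul]

lemma mul_wav (ha : IsSymbolP d m a) (hm : m < -1) (x : ℝ) (w : Par d) :
    (x : ℂ) * wav x (fun η => a (η, w)) =
      wav x (fun η => Complex.I • fderiv ℝ a (η, w) (1, 0)) := by
  have i0 := integrable_exp_mul x (ha.ws0.integrable hm w)
  have i1 := integrable_exp_mul x (ha.ws1.integrable (by linarith) w)
  set E : ℝ → ℂ := fun η => Complex.exp (Complex.I * ((x * η : ℝ) : ℂ)) with hE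
  have hEd : ∀ η : ℝ, HasDerivAt E (Complex.I * x * E η) η := by
    intro η
    have h1 : HasDerivAt (fun η : ℝ => Complex.I * ((x * η : ℝ) : ℂ)) (Complex.I * x) η := by
      have h2 : HasDerivAt (fun η : ℝ => x * η) (x * 1) η := (hasDerivAt_id η).const_mul x
      have h3 := h2.ofReal_comp.const_mul Complex.I
      simpa using h3
    have := h1.cexp
    rw [hE]
    simp only
    rw [mul_comm]
    exact this
  have hp := integral_mul_deriv_eq_deriv_mul_of_integrable (u := fun η => a (η, w))
    (u' := fun η => fderiv ℝ a (η, w) (1, 0)) (v := E) (v' := fun η => Complex.I * x * E η)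
    (fun η _ => ha.hasDerivAt η w) (fun η _ => hEd η)
    ((i0.const_mul (Complex.I * x)).congr (ae_of_all _ fun η => by
      simp only [Pi.mul_apply]; ring))
    ((i1.const_mul (-Complex.I)).congr (ae_of_all _ fun η => by
      simp only [Pi.mul_apply, smul_eq_mul]
      linear_combination (-E η * fderiv ℝ a (η, w) (1, 0)) * Complex.I_mul_I))
    (i0.congr (ae_of_all _ fun η => by simp only [Pi.mul_apply]; ring))
  have l1 : ∫ η : ℝ, a (η, w) * (Complex.I * x * E η) =
      Complex.I * x * wav x (fun η => a (η, w)) := by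
    unfold wav
    rw [← integral_const_mul]
    exact integral_congr_ae (ae_of_all _ fun η => by simp only [hE]; ring)
  have l2 : wav x (fun η => Complex.I • fderiv ℝ a (η, w) (1, 0)) =
      Complex.I * ∫ η : ℝ, fderiv ℝ a (η, w) (1, 0) * E η := by
    unfold wav
    rw [← integral_const_mul]
    exact integral_congr_ae (ae_of_all _ fun η => by simp only [hE, smul_eq_mul]; ring)
  rw [l1] at hp
  rw [l2]
  linear_combination (-Complex.I) * hp + (x : ℂ) * wav x (fun η => a (η, w)) * Complex.I_mul_I

/-- The dilation of the first two parameters. -/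
def St (d : ℕ) (t : ℝ) (w : Par d) : Par d := (t * w.1, t * w.2.1, w.2.2)

lemma ftc (ha : IsSymbolP d m a) (η : ℝ) (w : Par d) :
    a (η, St d 1 w) - a (η, St d 0 w) = ∫ t : unitInterval,
      ((w.1 : ℂ) * fderiv ℝ a (η, St d t w) (0, (1, 0, 0)) +
        (w.2.1 : ℂ) * fderiv ℝ a (η, St d t w) (0, (0, 1, 0))) := by
  have hSc : Continuous (fun t : ℝ => (η, St d t w)) := by unfold St; fun_prop
  have hc : ∀ u, Continuous (fun t : ℝ => fderiv ℝ a (η, St d t w) u) := fun u =>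
    (ha.smooth_fd u).continuous.comp hSc
  have hd : ∀ t : ℝ, HasDerivAt (fun t : ℝ => a (η, St d t w))
      ((w.1 : ℂ) * fderiv ℝ a (η, St d t w) (0, (1, 0, 0)) +
        (w.2.1 : ℂ) * fderiv ℝ a (η, St d t w) (0, (0, 1, 0))) t := by
    intro t
    have h1 : HasFDerivAt a (fderiv ℝ a (η, St d t w)) (η, St d t w) :=
      (ha.1.differentiable (by simp) _).hasFDerivAt
    have h2 : HasDerivAt (fun t : ℝ => (η, St d t w))
        ((0 : ℝ), ((1 : ℝ) * w.1, (1 : ℝ) * w.2.1, (0 : EuclideanSpace ℝ (Fin d)))) t :=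
      (hasDerivAt_const t η).prodMk (((hasDerivAt_id t).mul_const w.1).prodMk
        (((hasDerivAt_id t).mul_const w.2.1).prodMk (hasDerivAt_const t w.2.2)))
    have h3 := h1.comp_hasDerivAt t h2
    refine h3.congr_deriv ?_
    have : (((0 : ℝ), ((1 : ℝ) * w.1, (1 : ℝ) * w.2.1, (0 : EuclideanSpace ℝ (Fin d)))) :
        ℝ × Par d) = w.1 • ((0 : ℝ), ((1 : ℝ), (0 : ℝ), (0 : EuclideanSpace ℝ (Fin d)))) +
        w.2.1 • ((0 : ℝ), ((0 : ℝ), (1 : ℝ), (0 : EuclideanSpace ℝ (Fin d)))) := by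
      simp
    rw [this, map_add, map_smul, map_smul, Complex.real_smul, Complex.real_smul]
  have h := intervalIntegral.integral_eq_sub_of_hasDerivAt (a := 0) (b := 1) (fun t _ => hd t)
    (Continuous.intervalIntegrable (((hc _).const_mul _).add ((hc _).const_mul _)) _ _)
  rw [← h, intervalIntegral.integral_of_le zero_le_one, ← integral_Icc_eq_integral_Ioc]
  exact (integral_subtype measurableSet_Icc (fun t : ℝ =>
    ((w.1 : ℂ) * fderiv ℝ a (η, St d t w) (0, (1, 0, 0)) +
        (w.2.1 : ℂ) * fderiv ℝ a (η, St d t w) (0, (0, 1, 0))))).symm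

lemma wav_joint {M : ℝ} {b : ℝ → Par d → ℂ} (hb : WS d M b) (hM : M < -1) (x : ℝ) (w : Par d) :
    Integrable (fun q : ℝ × unitInterval =>
      Complex.exp (Complex.I * ((x * q.1 : ℝ) : ℂ)) * b q.1 (St d q.2 w))
      ((volume : Measure ℝ).prod (volume : Measure unitInterval)) := by
  obtain ⟨C, h0, h⟩ := hb.bd 0
  refine (((integrable_pow1 M hM).const_mul C).mul_prod
    (integrable_const (μ := (volume : Measure unitInterval)) (1 : ℝ))).mono' ?_
    (ae_of_all _ fun q => ?_)
  · have h1 : Continuous (fun q : ℝ × unitInterval => b q.1 (St d q.2 w)) :=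
      hb.cont.comp (by unfold St; fun_prop :
        Continuous (fun q : ℝ × unitInterval => (q.1, St d q.2 w)))
    have h2 : Continuous (fun q : ℝ × unitInterval =>
      Complex.exp (Complex.I * ((x * q.1 : ℝ) : ℂ))) := by fun_prop
    exact (h2.mul h1).aestronglyMeasurable
  · rw [norm_mul, norm_exp_I, one_mul, mul_one]
    simpa using h q.1 (St d q.2 w)

lemma wav_diff (ha : IsSymbolP d m a) (hm : m < -1) (x : ℝ) (w : Par d) :
    wav x (fun η => a (η, St d 1 w)) - wav x (fun η => a (η, St d 0 w)) =
      (w.1 : ℂ) * (∫ t : unitInterval,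
        wav x (fun η => fderiv ℝ a (η, St d t w) (0, (1, 0, 0)))) +
      (w.2.1 : ℂ) * (∫ t : unitInterval,
        wav x (fun η => fderiv ℝ a (η, St d t w) (0, (0, 1, 0)))) := by
  have j1 := wav_joint (ha.ws2 (1, 0, 0) (by simp [Prod.norm_def])) hm x w
  have j2 := wav_joint (ha.ws2 (0, 1, 0) (by simp [Prod.norm_def])) hm x w
  have s1 := integral_integral_swap (f := fun (η : ℝ) (t : unitInterval) =>
    Complex.exp (Complex.I * ((x * η : ℝ) : ℂ)) * fderiv ℝ a (η, St d t w) (0, (1, 0, 0))) j1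
  have s2 := integral_integral_swap (f := fun (η : ℝ) (t : unitInterval) =>
    Complex.exp (Complex.I * ((x * η : ℝ) : ℂ)) * fderiv ℝ a (η, St d t w) (0, (0, 1, 0))) j2
  have k1 := j1.integral_prod_left
  have k2 := j2.integral_prod_left
  unfold wav
  rw [← s1, ← s2, ← integral_const_mul, ← integral_const_mul,
    ← integral_add (k1.const_mul _) (k2.const_mul _),
    ← integral_sub (integrable_exp_mul x (ha.ws0.integrable hm _))
      (integrable_exp_mul x (ha.ws0.integrable hm _))]
  refine integral_congr_ae (ae_of_all _ fun η => ?_)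
  simp only
  have hc : ∀ u, Continuous (fun t : unitInterval => fderiv ℝ a (η, St d t w) u) := fun u =>
    (ha.smooth_fd u).continuous.comp (by unfold St; fun_prop)
  have hi : ∀ u, Integrable (fun t : unitInterval => fderiv ℝ a (η, St d t w) u) := fun u =>
    (hc u).integrable_of_hasCompactSupport (HasCompactSupport.of_compactSpace _)
  rw [← mul_sub, ftc ha, integral_add ((hi _).const_mul _) ((hi _).const_mul _),
    integral_const_mul, integral_const_mul, integral_const_mul, integral_const_mul]
  ring

end sym


section maps
variable (d : ℕ)

/-- Parameter projections composed with the dilation by `t`. -/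
def L1 (t : ℝ) : Sp d →L[ℝ] Par d := LinearMap.toContinuousLinearMap
  { toFun := fun y => St d t (y.2.1, y.2.2.1, y.2.2.2)
    map_add' := by intros; simp [St, mul_add]
    map_smul' := by intros; simp [St, mul_left_comm] }

/-- See `L1`. -/
def L2 (t : ℝ) : Sp d →L[ℝ] Par d := LinearMap.toContinuousLinearMap
  { toFun := fun y => St d t (y.1, y.2.2.1, y.2.2.2)
    map_add' := by intros; simp [St, mul_add]
    map_smul' := by intros; simp [St, mul_left_comm] }

/-- See `L1`. -/
def L3 (t : ℝ) : Sp d →L[ℝ] Par d := LinearMap.toContinuousLinearMap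
  { toFun := fun y => St d t (y.1, y.2.1, y.2.2.2)
    map_add' := by intros; simp [St, mul_add]
    map_smul' := by intros; simp [St, mul_left_comm] }

lemma St_norm (t : unitInterval) (w : Par d) : ‖St d t w‖ ≤ ‖w‖ := by
  obtain ⟨x, y, z⟩ := w
  have ht : |(t : ℝ)| ≤ 1 := by rw [abs_of_nonneg t.2.1]; exact t.2.2
  change max |t * x| (max |t * y| ‖z‖) ≤ max |x| (max |y| ‖z‖)
  rw [abs_mul, abs_mul]
  have h1 := mul_le_of_le_one_left (abs_nonneg x) ht
  have h2 := mul_le_of_le_one_left (abs_nonneg y) ht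
  gcongr

lemma L1_norm (t : unitInterval) : ‖L1 d t‖ ≤ 1 := by
  refine ContinuousLinearMap.opNorm_le_bound _ zero_le_one fun y => ?_
  rw [one_mul]
  refine (St_norm d t (y.2.1, y.2.2.1, y.2.2.2)).trans ?_
  obtain ⟨x, y, z, w⟩ := y
  change max |y| (max |z| ‖w‖) ≤ max |x| (max |y| (max |z| ‖w‖))
  simp

lemma L2_norm (t : unitInterval) : ‖L2 d t‖ ≤ 1 := by
  refine ContinuousLinearMap.opNorm_le_bound _ zero_le_one fun y => ?_
  rw [one_mul]
  refine (St_norm d t (y.1, y.2.2.1, y.2.2.2)).trans ?_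
  obtain ⟨x, y, z, w⟩ := y
  change max |x| (max |z| ‖w‖) ≤ max |x| (max |y| (max |z| ‖w‖))
  exact max_le_max le_rfl (le_max_right _ _)

lemma L3_norm (t : unitInterval) : ‖L3 d t‖ ≤ 1 := by
  refine ContinuousLinearMap.opNorm_le_bound _ zero_le_one fun y => ?_
  rw [one_mul]
  refine (St_norm d t (y.1, y.2.1, y.2.2.2)).trans ?_
  obtain ⟨x, y, z, w⟩ := y
  change max |x| (max |y| ‖w‖) ≤ max |x| (max |y| (max |z| ‖w‖))
  exact max_le_max le_rfl (max_le_max le_rfl (le_max_right _ _))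

variable {d}

lemma WS.amp1 {M : ℝ} {b : ℝ → Par d → ℂ} (hb : WS d M b) (f : unitInterval → unitInterval)
    (hf : Continuous f) :
    Amp d M (fun t η y => b η (St d (f t) (y.2.1, y.2.2.1, y.2.2.2))) :=
  hb.amp (fun t => L1 d (f t)) (fun t => L1_norm d (f t)) (by
    change Continuous (fun p : unitInterval × Sp d =>
      St d (f p.1) (p.2.2.1, p.2.2.2.1, p.2.2.2.2))
    unfold St; fun_prop)

lemma WS.amp2 {M : ℝ} {b : ℝ → Par d → ℂ} (hb : WS d M b) (f : unitInterval → unitInterval)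
    (hf : Continuous f) :
    Amp d M (fun t η y => b η (St d (f t) (y.1, y.2.2.1, y.2.2.2))) :=
  hb.amp (fun t => L2 d (f t)) (fun t => L2_norm d (f t)) (by
    change Continuous (fun p : unitInterval × Sp d =>
      St d (f p.1) (p.2.1, p.2.2.2.1, p.2.2.2.2))
    unfold St; fun_prop)

lemma WS.amp3 {M : ℝ} {b : ℝ → Par d → ℂ} (hb : WS d M b) (f : unitInterval → unitInterval)
    (hf : Continuous f) :
    Amp d M (fun t η y => b η (St d (f t) (y.1, y.2.1, y.2.2.2))) :=
  hb.amp (fun t => L3 d (f t)) (fun t => L3_norm d (f t)) (by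
    change Continuous (fun p : unitInterval × Sp d =>
      St d (f p.1) (p.2.1, p.2.2.1, p.2.2.2.2))
    unfold St; fun_prop)

end maps

lemma FT_add (d : ℕ) (f g : Sp d → ℂ) (hf : Integrable f) (hg : Integrable g) (ξ : Sp d) :
    FT d (fun y => f y + g y) ξ = FT d f ξ + FT d g ξ := by
  have hexp : ∀ y : Sp d, ‖Complex.exp (-(Complex.I * (pairing d y ξ : ℂ)))‖ = 1 := by
    intro y
    rw [← norm_exp_I (-pairing d y ξ)]
    congr 2
    push_cast
    ring
  have hc : Continuous (fun y : Sp d => Complex.exp (-(Complex.I * (pairing d y ξ : ℂ)))) := by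
    unfold pairing; fun_prop
  have hi : ∀ f : Sp d → ℂ, Integrable f → Integrable (fun y : Sp d =>
      Complex.exp (-(Complex.I * (pairing d y ξ : ℂ))) * f y) := by
    intro f hf
    refine hf.norm.mono' (hc.aestronglyMeasurable.mul hf.1) (ae_of_all _ fun y => ?_)
    rw [norm_mul, hexp, one_mul]
  unfold FT
  rw [← integral_add (hi f hf) (hi g hg)]
  exact integral_congr_ae (ae_of_all _ fun y => by simp only; ring)


/-- **Triple-product statement (5.27) of Proposition 5.21:** the product of
three transversal conormal waves equals the product-type conormal distribution
`V` attached to the codimension-three intersection, modulo errors in `K^{0,m}`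
(expressed on the Fourier transform side). -/
theorem stmt_7 (d : ℕ) (m : ℝ) (hm : m < -1)
    (a₁ a₂ a₃ : ℝ × Par d → ℂ)
    (ha₁ : IsSymbolP d m a₁) (ha₂ : IsSymbolP d m a₂) (ha₃ : IsSymbolP d m a₃)
    (φ : Sp d → ℂ) (hφ : ContDiff ℝ (⊤ : ℕ∞) φ) (hφc : HasCompactSupport φ) :
    ∃ e₁ e₂ e₃ : Sp d → ℂ,
      Measurable e₁ ∧ Measurable e₂ ∧ Measurable e₃ ∧
      (∀ η : Sp d,
        FT d (fun y => φ y * (v1 d a₁ y * v2 d a₂ y * v3 d a₃ y - Vt d a₁ a₂ a₃ y)) η =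
          e₁ η + e₂ η + e₃ η) ∧
      (∀ δ : ℝ, 0 < δ →
        MemLp (fun η => W d (-m + 1/2) (-m - 1/2) (-m - 1/2) δ η • e₁ η) 2 volume ∧
        MemLp (fun η => W d (-m - 1/2) (-m + 1/2) (-m - 1/2) δ η • e₂ η) 2 volume ∧
        MemLp (fun η => W d (-m - 1/2) (-m - 1/2) (-m + 1/2) δ η • e₃ η) 2 volume) := by
  have hv₁ : ‖((1, 0, 0) : Par d)‖ ≤ 1 := by simp [Prod.norm_def]
  have hv₂ : ‖((0, 1, 0) : Par d)‖ ≤ 1 := by simp [Prod.norm_def]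
  have hm' : m - 1 < -1 := by linarith
  let Z1 : unitInterval → ℝ → Sp d → ℂ := fun _ η y => a₁ (η, St d 0 (y.2.1, y.2.2.1, y.2.2.2))
  have hZ1 : Amp d m Z1 := by
    simpa [Z1] using ha₁.ws0.amp1 (fun _ => 0) continuous_const
  let E1 : unitInterval → ℝ → Sp d → ℂ := fun _ η y => Complex.I • fderiv ℝ a₁ (η, St d 0 (y.2.1, y.2.2.1, y.2.2.2)) (1, 0)
  have hE1 : Amp d (m - 1) E1 := by
    simpa [E1] using ha₁.ws1.amp1 (fun _ => 0) continuous_const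
  let P1 : unitInterval → ℝ → Sp d → ℂ := fun t η y => fderiv ℝ a₁ (η, St d t (y.2.1, y.2.2.1, y.2.2.2)) (0, (1, 0, 0))
  have hP1 : Amp d m P1 := by
    simpa [P1] using (ha₁.ws2 (1, 0, 0) hv₁).amp1 (fun t => t) continuous_id
  let Q1 : unitInterval → ℝ → Sp d → ℂ := fun t η y => fderiv ℝ a₁ (η, St d t (y.2.1, y.2.2.1, y.2.2.2)) (0, (0, 1, 0))
  have hQ1 : Amp d m Q1 := by
    simpa [Q1] using (ha₁.ws2 (0, 1, 0) hv₂).amp1 (fun t => t) continuous_id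
  let A2 : unitInterval → ℝ → Sp d → ℂ := fun _ η y => a₂ (η, St d 1 (y.1, y.2.2.1, y.2.2.2))
  have hA2 : Amp d m A2 := by
    simpa [A2] using ha₂.ws0.amp2 (fun _ => 1) continuous_const
  let Z2 : unitInterval → ℝ → Sp d → ℂ := fun _ η y => a₂ (η, St d 0 (y.1, y.2.2.1, y.2.2.2))
  have hZ2 : Amp d m Z2 := by
    simpa [Z2] using ha₂.ws0.amp2 (fun _ => 0) continuous_const
  let D2 : unitInterval → ℝ → Sp d → ℂ := fun _ η y => Complex.I • fderiv ℝ a₂ (η, St d 1 (y.1, y.2.2.1, y.2.2.2)) (1, 0)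
  have hD2 : Amp d (m - 1) D2 := by
    simpa [D2] using ha₂.ws1.amp2 (fun _ => 1) continuous_const
  let E2 : unitInterval → ℝ → Sp d → ℂ := fun _ η y => Complex.I • fderiv ℝ a₂ (η, St d 0 (y.1, y.2.2.1, y.2.2.2)) (1, 0)
  have hE2 : Amp d (m - 1) E2 := by
    simpa [E2] using ha₂.ws1.amp2 (fun _ => 0) continuous_const
  let P2 : unitInterval → ℝ → Sp d → ℂ := fun t η y => fderiv ℝ a₂ (η, St d t (y.1, y.2.2.1, y.2.2.2)) (0, (1, 0, 0))
  have hP2 : Amp d m P2 := by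
    simpa [P2] using (ha₂.ws2 (1, 0, 0) hv₁).amp2 (fun t => t) continuous_id
  let Q2 : unitInterval → ℝ → Sp d → ℂ := fun t η y => fderiv ℝ a₂ (η, St d t (y.1, y.2.2.1, y.2.2.2)) (0, (0, 1, 0))
  have hQ2 : Amp d m Q2 := by
    simpa [Q2] using (ha₂.ws2 (0, 1, 0) hv₂).amp2 (fun t => t) continuous_id
  let A3 : unitInterval → ℝ → Sp d → ℂ := fun _ η y => a₃ (η, St d 1 (y.1, y.2.1, y.2.2.2))
  have hA3 : Amp d m A3 := by
    simpa [A3] using ha₃.ws0.amp3 (fun _ => 1) continuous_const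
  let D3 : unitInterval → ℝ → Sp d → ℂ := fun _ η y => Complex.I • fderiv ℝ a₃ (η, St d 1 (y.1, y.2.1, y.2.2.2)) (1, 0)
  have hD3 : Amp d (m - 1) D3 := by
    simpa [D3] using ha₃.ws1.amp3 (fun _ => 1) continuous_const
  let P3 : unitInterval → ℝ → Sp d → ℂ := fun t η y => fderiv ℝ a₃ (η, St d t (y.1, y.2.1, y.2.2.2)) (0, (1, 0, 0))
  have hP3 : Amp d m P3 := by
    simpa [P3] using (ha₃.ws2 (1, 0, 0) hv₁).amp3 (fun t => t) continuous_id
  let Q3 : unitInterval → ℝ → Sp d → ℂ := fun t η y => fderiv ℝ a₃ (η, St d t (y.1, y.2.1, y.2.2.2)) (0, (0, 1, 0))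
  have hQ3 : Amp d m Q3 := by
    simpa [Q3] using (ha₃.ws2 (0, 1, 0) hv₂).amp3 (fun t => t) continuous_id
  have k1 := key_dec hE1 hP2 hA3 hm' hm hm hφ hφc
  have i1 := phiRR_int hE1 hP2 hA3 hm' hm hm hφ hφc
  have k2 := key_dec hE1 hZ2 hP3 hm' hm hm hφ hφc
  have i2 := phiRR_int hE1 hZ2 hP3 hm' hm hm hφ hφc
  have k3 := key_dec hP1 hD2 hA3 hm hm' hm hφ hφc
  have i3 := phiRR_int hP1 hD2 hA3 hm hm' hm hφ hφc
  have k4 := key_dec hZ1 hE2 hQ3 hm hm' hm hφ hφc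
  have i4 := phiRR_int hZ1 hE2 hQ3 hm hm' hm hφ hφc
  have k5 := key_dec hQ1 hA2 hD3 hm hm hm' hφ hφc
  have i5 := phiRR_int hQ1 hA2 hD3 hm hm hm' hφ hφc
  have k6 := key_dec hZ1 hQ2 hD3 hm hm hm' hφ hφc
  have i6 := phiRR_int hZ1 hQ2 hD3 hm hm hm' hφ hφc
  set R1 : Sp d → ℂ := RR d E1 P2 A3 with hR1
  set R2 : Sp d → ℂ := RR d E1 Z2 P3 with hR2
  set R3 : Sp d → ℂ := RR d P1 D2 A3 with hR3
  set R4 : Sp d → ℂ := RR d Z1 E2 Q3 with hR4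
  set R5 : Sp d → ℂ := RR d Q1 A2 D3 with hR5
  set R6 : Sp d → ℂ := RR d Z1 Q2 D3 with hR6
  have hdecomp : ∀ y : Sp d, v1 d a₁ y * v2 d a₂ y * v3 d a₃ y - Vt d a₁ a₂ a₃ y =
      (R1 y + R2 y) + (R3 y + R4 y) + (R5 y + R6 y) := by
    intro y
    have hV : Vt d a₁ a₂ a₃ y = wav y.1 (fun η => Z1 0 η y) * wav y.2.1 (fun η => Z2 0 η y) *
        wav y.2.2.1 (fun η => a₃ (η, St d 0 (y.1, y.2.1, y.2.2.2))) := by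
      rw [triple_wav]
      simp only [Z1, Z2, St, zero_mul]
      rfl
    have hS1 : ∀ w : Par d, St d 1 w = w := fun w => by simp [St]
    have w1 : v1 d a₁ y = wav y.1 (fun η => a₁ (η, St d 1 (y.2.1, y.2.2.1, y.2.2.2))) := by
      rw [hS1]; rfl
    have w2 : v2 d a₂ y = wav y.2.1 (fun η => a₂ (η, St d 1 (y.1, y.2.2.1, y.2.2.2))) := by
      rw [hS1]; rfl
    have w3 : v3 d a₃ y = wav y.2.2.1 (fun η => a₃ (η, St d 1 (y.1, y.2.1, y.2.2.2))) := by
      rw [hS1]; rfl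
    have d1 := wav_diff ha₁ hm y.1 (y.2.1, y.2.2.1, y.2.2.2)
    have d2 := wav_diff ha₂ hm y.2.1 (y.1, y.2.2.1, y.2.2.2)
    have d3 := wav_diff ha₃ hm y.2.2.1 (y.1, y.2.1, y.2.2.2)
    have x10 := mul_wav ha₁ hm y.1 (St d 0 (y.2.1, y.2.2.1, y.2.2.2))
    have x20 := mul_wav ha₂ hm y.2.1 (St d 0 (y.1, y.2.2.1, y.2.2.2))
    have x21 := mul_wav ha₂ hm y.2.1 (St d 1 (y.1, y.2.2.1, y.2.2.2))
    have x31 := mul_wav ha₃ hm y.2.2.1 (St d 1 (y.1, y.2.1, y.2.2.2))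
    rw [hV, w1, w2, w3]
    simp only [hR1, hR2, hR3, hR4, hR5, hR6, RR, integral_mul_const, integral_const_mul,
      A2, A3, Z1, Z2, D2, D3, E1, E2, P1, P2, P3, Q1, Q2, Q3]
    rw [← x10, ← x20, ← x21, ← x31]
    simp only at d1 d2 d3
    linear_combination
      d1 * wav y.2.1 (fun η => a₂ (η, St d 1 (y.1, y.2.2.1, y.2.2.2))) *
        wav y.2.2.1 (fun η => a₃ (η, St d 1 (y.1, y.2.1, y.2.2.2))) +
      wav y.1 (fun η => a₁ (η, St d 0 (y.2.1, y.2.2.1, y.2.2.2))) * d2 *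
        wav y.2.2.1 (fun η => a₃ (η, St d 1 (y.1, y.2.1, y.2.2.2))) +
      wav y.1 (fun η => a₁ (η, St d 0 (y.2.1, y.2.2.1, y.2.2.2))) *
        wav y.2.1 (fun η => a₂ (η, St d 0 (y.1, y.2.2.1, y.2.2.2))) * d3
  have c1 := k1.add k2
  have c2 := k3.add k4
  have c3 := k5.add k6
  refine ⟨_, _, _, c1.1.measurable, c2.1.measurable, c3.1.measurable, ?_, ?_⟩
  · intro η
    simp only [hdecomp]
    have j1 : Integrable (fun y => φ y * R1 y + φ y * R2 y) volume := i1.add i2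
    have j2 : Integrable (fun y => φ y * R3 y + φ y * R4 y) volume := i3.add i4
    have j3 : Integrable (fun y => φ y * R5 y + φ y * R6 y) volume := i5.add i6
    have j4 : Integrable (fun y => (φ y * R1 y + φ y * R2 y) + (φ y * R3 y + φ y * R4 y))
      volume := j1.add j2
    rw [← FT_add d _ _ i1 i2, ← FT_add d _ _ i3 i4, ← FT_add d _ _ i5 i6,
      ← FT_add d _ _ j1 j2, ← FT_add d _ _ j4 j3]
    congr 1
    funext y
    ring
  · intro δ hδ
    refine ⟨c1.memLp ?_ ?_ ?_ ?_ ?_ ?_ hδ, c2.memLp ?_ ?_ ?_ ?_ ?_ ?_ hδ,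
      c3.memLp ?_ ?_ ?_ ?_ ?_ ?_ hδ⟩ <;> linarith
end
end
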